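/- arXiv:math/0612858 — 6 statements merged into one kernel-verified Lean document; each statement's English description precedes it below -/
import Mathlib

section
/- Bi-positivity of σ̄ (part of Proposition 5.2): each component yj of σ̄(x) (j=0,...,5), regarded as an element of the rational function field ℝ(x0,...,x5), can be written as a quotient g/h of two nonzero polynomials g,h ∈ ℝ[x0,...,x5] all of whose coefficients are nonnegative; and likewise each component xj of the inverse map σ̄^{-1}(y) (j=0,...,5), regarded as an element of ℝ(y0,...,y5), can be written as a quotient of two nonzero polynomials in y0,...,y5 with nonnegative coefficients. -/
noncomputable section

def Xf1 (x0 x1 x2 x3 x4 x5 : ℝ) : ℝ :=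
  1 + x3/x0 + x1*x3^2/(x0*x2^3) + 3*x1*x3*x4/(x0*x2^2) + 3*x1*x4^2/(x0*x2)
    + x1*x4^3/(x0*x3) + (x1/x0 + x1*x3/x0^2)*x5

def Xf2 (x0 x1 x2 x3 x4 x5 : ℝ) : ℝ :=
  x2^3/x1^2 + x3^2/x2^3 + 3*x3*x4/x2^2 + 3*x4^2/x2 + x4^3/x3 + x5 + x3*x5/x0
    + (x0*x3*(2*x3 + 3*x2*x4) + x2^3*(x4^3 + x3*x5))/(x0*x1*x3)

def Mf (x0 x1 x2 x3 x4 x5 : ℝ) : ℝ :=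
  x3*x4^2/(x0*x2) + 3*x4^3/x0 + x3*x5/(x2*x4) + x2*(3*x4^4/(x0*x3) + 3*x4*x5/x0)
    + x2^2*(x4^2/(x0*x1) + x4^2/(x1*x3) + x4^5/(x0*x3^2) + x5/(x1*x4)
      + 2*x4^2*x5/(x0*x3) + x5^2/(x0*x4))

def Nf (x0 x1 x2 x3 x4 x5 : ℝ) : ℝ :=
  3*x1*x3/x2^3 + x2*x3/(x1*x4^2) + 2*x3^2/(x2^2*x4^2) + x1*x3^3/(x2^5*x4^2)
    + 3*x3/(x2*x4) + 3*x1*x3^2/(x2^4*x4) + x1*x4/x2^2 + x2*x4/x0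
    + x1*x3*x5/(x2^2*x4^2) + x2*x3*x5/(x0*x4^2) + x1*x3^2*x5/(x0*x2^2*x4^2)

def af (x0 x1 x2 x3 x4 x5 : ℝ) : ℝ := Mf x0 x1 x2 x3 x4 x5 / (x2*x4)^2

def sy2 (x0 x1 x2 x3 x4 x5 : ℝ) : ℝ := x2/x1 + x3/x2^2 + 2*x4/x2 + x4^2/x3 + x5/x4

def sy4 (x0 x1 x2 x3 x4 x5 : ℝ) : ℝ :=
  Mf x0 x1 x2 x3 x4 x5 / (sy2 x0 x1 x2 x3 x4 x5 * x2 * x4)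

def sy0 (x0 x1 x2 x3 x4 x5 : ℝ) : ℝ := af x0 x1 x2 x3 x4 x5 * x0

def sy1 (x0 x1 x2 x3 x4 x5 : ℝ) : ℝ :=
  (sy2 x0 x1 x2 x3 x4 x5)^3 * (af x0 x1 x2 x3 x4 x5 * Xf1 x0 x1 x2 x3 x4 x5
    + (sy4 x0 x1 x2 x3 x4 x5)^3) / (af x0 x1 x2 x3 x4 x5 * Xf2 x0 x1 x2 x3 x4 x5)

def sy3 (x0 x1 x2 x3 x4 x5 : ℝ) : ℝ :=
  af x0 x1 x2 x3 x4 x5 * Xf1 x0 x1 x2 x3 x4 x5 / sy1 x0 x1 x2 x3 x4 x5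

def sy5 (x0 x1 x2 x3 x4 x5 : ℝ) : ℝ :=
  (x5 * Mf x0 x1 x2 x3 x4 x5 * Nf x0 x1 x2 x3 x4 x5 / (x1*x2*x3*x4))
    / (af x0 x1 x2 x3 x4 x5 * Xf2 x0 x1 x2 x3 x4 x5
        * (sy3 x0 x1 x2 x3 x4 x5
            + sy1 x0 x1 x2 x3 x4 x5 * (sy3 x0 x1 x2 x3 x4 x5)^2 / (sy4 x0 x1 x2 x3 x4 x5)^3))

end

noncomputable section

def Ybar1 (y0 y1 y2 y3 y4 y5 : ℝ) : ℝ :=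
  y0^2/(y1*y3) + y5 + y0*(1/y3 + y5/y1 + y3*y5/y4^3)

def Ybar2 (y0 y1 y2 y3 y4 y5 : ℝ) : ℝ :=
  1 + y0*(1/y1 + y1/(y2^3*y3) + 3*y4/(y2^2*y3) + 3*y4^2/(y1*y2*y3) + y4^3/(y1^2*y3))
    + (y1/y2^3 + y3*(2/y1 + 3/(y2*y4)) + y0*y1*y3/(y2^3*y4^3) + y3^2/y4^3
        + 3*y4/y2^2 + 3*y4^2/(y1*y2) + y4^3/y1^2)*y5

def Ybar3 (y0 y1 y2 y3 y4 y5 : ℝ) : ℝ :=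
  y2 + y0*(y2/y1 + y4/(y2*y3) + 2*y4^2/(y1*y3) + y2*y4^3/(y1^2*y3))
    + (y3*(2*y2/y1 + 2/y4) + y2*y3^2/y4^3 + y4/y2 + 2*y4^2/y1 + y2*y4^3/y1^2)*y5

def Pbar (y0 y1 y2 y3 y4 y5 : ℝ) : ℝ :=
  y0 + y1 + y0*y1*y5/y2^3 + 2*y3*y5 + 2*y0*y3*y5/y1 + y0*y3^2*y5/y4^3
    + 2*y1*y3^2*y5/y4^3 + 3*y0*y3*y5/(y2*y4) + 3*y1*y3*y5/(y2*y4) + 3*y0*y4*y5/y2^2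
    + 3*y0*y4^2*y5/(y1*y2) + y0*y4^3*y5/y1^2 + y1*y3*y5^2/y2^3 + 3*y3^2*y5^2/y1
    + y1*y3^4*y5^2/y4^6 + 3*y1*y3^3*y5^2/(y2*y4^4) + 3*y3^3*y5^2/y4^3
    + 3*y1*y3^2*y5^2/(y2^2*y4^2) + 6*y3^2*y5^2/(y2*y4) + 3*y3*y4*y5^2/y2^2
    + 3*y3*y4^2*y5^2/(y1*y2) + y3*y4^3*y5^2/y1^2

def invx0 (y0 y1 y2 y3 y4 y5 : ℝ) : ℝ := Ybar1 y0 y1 y2 y3 y4 y5 / y0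

def invx1 (y0 y1 y2 y3 y4 y5 : ℝ) : ℝ := Ybar2 y0 y1 y2 y3 y4 y5 / y0

def invx2 (y0 y1 y2 y3 y4 y5 : ℝ) : ℝ := Ybar3 y0 y1 y2 y3 y4 y5 / y0

def invx4 (y0 y1 y2 y3 y4 y5 : ℝ) : ℝ :=
  y2*y4*Ybar1 y0 y1 y2 y3 y4 y5 / (y0 * Ybar3 y0 y1 y2 y3 y4 y5)

def invx3 (y0 y1 y2 y3 y4 y5 : ℝ) : ℝ :=
  Pbar y0 y1 y2 y3 y4 y5 * Ybar1 y0 y1 y2 y3 y4 y5 / (y0^2 * Ybar2 y0 y1 y2 y3 y4 y5)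

def invx5 (y0 y1 y2 y3 y4 y5 : ℝ) : ℝ :=
  (y5 * Ybar1 y0 y1 y2 y3 y4 y5
      * (1 + y1/y0 + y3*y5/y0 + y1*y3*y5/y0^2 + y1*y3^2*y5/(y0*y4^3)))
    / (y0^2 * invx1 y0 y1 y2 y3 y4 y5 * invx3 y0 y1 y2 y3 y4 y5)

end

noncomputable section

/-- the map `σ̄ : (x0,...,x5) ↦ (y0,...,y5)` -/
def sigVec (x : Fin 6 → ℝ) : Fin 6 → ℝ :=
  ![sy0 (x 0) (x 1) (x 2) (x 3) (x 4) (x 5),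
    sy1 (x 0) (x 1) (x 2) (x 3) (x 4) (x 5),
    sy2 (x 0) (x 1) (x 2) (x 3) (x 4) (x 5),
    sy3 (x 0) (x 1) (x 2) (x 3) (x 4) (x 5),
    sy4 (x 0) (x 1) (x 2) (x 3) (x 4) (x 5),
    sy5 (x 0) (x 1) (x 2) (x 3) (x 4) (x 5)]

end

noncomputable section

/-- the inverse map `σ̄⁻¹ : (y0,...,y5) ↦ (x0,...,x5)` -/
def invVec (y : Fin 6 → ℝ) : Fin 6 → ℝ :=
  ![invx0 (y 0) (y 1) (y 2) (y 3) (y 4) (y 5),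
    invx1 (y 0) (y 1) (y 2) (y 3) (y 4) (y 5),
    invx2 (y 0) (y 1) (y 2) (y 3) (y 4) (y 5),
    invx3 (y 0) (y 1) (y 2) (y 3) (y 4) (y 5),
    invx4 (y 0) (y 1) (y 2) (y 3) (y 4) (y 5),
    invx5 (y 0) (y 1) (y 2) (y 3) (y 4) (y 5)]

end

/-!
Call a function subtraction-free if on the positive orthant it is a quotient of two nonzero
polynomials with natural number coefficients. Such polynomials take positive values at positive
points, so denominators never vanish there and fractions add in the usual way; hence
subtraction-free functions are closed under addition, multiplication, division and powers. The
formulas for `σ̄` and `σ̄⁻¹` use nothing else, starting from the coordinates and positive integers.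
-/

open MvPolynomial

section MvPolynomial

variable {σ R K : Type*}

theorem mvPolynomial_add_ne_zero_of_left [CommSemiring R] [Subsingleton (AddUnits R)]
    {p : MvPolynomial σ R} (hp : p ≠ 0) (q : MvPolynomial σ R) : p + q ≠ 0 := by
  obtain ⟨d, hd⟩ := ne_zero_iff.mp hp
  refine ne_zero_iff.mpr ⟨d, fun h => hd ?_⟩
  rw [coeff_add] at h
  exact (add_eq_zero.mp h).1

theorem mvPolynomial_aeval_pos [CommSemiring K] [PartialOrder K] [IsStrictOrderedRing K]
    {p : MvPolynomial σ ℕ} (hp : p ≠ 0) {x : σ → K} (hx : ∀ i, 0 < x i) : 0 < aeval x p := by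
  rw [aeval_def, eval₂_eq]
  refine Finset.sum_pos (fun d hd => mul_pos ?_ (Finset.prod_pos fun i _ => pow_pos (hx i) _))
    (support_nonempty.mpr hp)
  exact Nat.cast_pos.mpr (Nat.pos_of_ne_zero (mem_support_iff.mp hd))

end MvPolynomial

/-- A subtraction-free function: a rational function, tested only on the positive orthant, that is
a quotient of two nonzero polynomials with natural number coefficients. -/
@[fun_prop]
def IsSubtractionFree {σ K : Type*} [Semifield K] [PartialOrder K] (f : (σ → K) → K) : Prop :=
  ∃ p q : MvPolynomial σ ℕ, p ≠ 0 ∧ q ≠ 0 ∧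
    ∀ x : σ → K, (∀ i, 0 < x i) → f x = aeval x p / aeval x q

namespace IsSubtractionFree

variable {σ K : Type*} [Semifield K] [PartialOrder K] {f g : (σ → K) → K}

theorem of_aeval {p : MvPolynomial σ ℕ} (hp : p ≠ 0) :
    IsSubtractionFree fun x : σ → K => aeval x p :=
  ⟨p, 1, hp, one_ne_zero, fun x _ => by rw [map_one, div_one]⟩

@[fun_prop]
theorem coord (i : σ) : IsSubtractionFree fun x : σ → K => x i := by
  simpa only [aeval_X] using of_aeval (K := K) (X_ne_zero (R := ℕ) i)

theorem natCast (n : ℕ) [NeZero n] : IsSubtractionFree fun _ : σ → K => (n : K) := by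
  simpa only [map_natCast] using
    of_aeval (σ := σ) (K := K) (Nat.cast_ne_zero.mpr (NeZero.ne n))

@[fun_prop]
theorem one : IsSubtractionFree fun _ : σ → K => (1 : K) := by
  simpa only [Nat.cast_one] using natCast (σ := σ) (K := K) 1

@[fun_prop]
theorem ofNat (n : ℕ) [n.AtLeastTwo] :
    IsSubtractionFree fun _ : σ → K => (OfNat.ofNat n : K) :=
  natCast n

@[fun_prop]
theorem mul (hf : IsSubtractionFree f) (hg : IsSubtractionFree g) :
    IsSubtractionFree fun x => f x * g x := by
  obtain ⟨p₁, q₁, hp₁, hq₁, hf⟩ := hf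
  obtain ⟨p₂, q₂, hp₂, hq₂, hg⟩ := hg
  refine ⟨p₁ * p₂, q₁ * q₂, mul_ne_zero hp₁ hp₂, mul_ne_zero hq₁ hq₂, fun x hx => ?_⟩
  simp only [hf x hx, hg x hx, div_mul_div_comm, map_mul]

theorem inv (hf : IsSubtractionFree f) : IsSubtractionFree fun x => (f x)⁻¹ := by
  obtain ⟨p, q, hp, hq, hf⟩ := hf
  exact ⟨q, p, hq, hp, fun x hx => by simp only [hf x hx, inv_div]⟩

@[fun_prop]
theorem div (hf : IsSubtractionFree f) (hg : IsSubtractionFree g) :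
    IsSubtractionFree fun x => f x / g x := by
  simpa only [div_eq_mul_inv] using hf.mul hg.inv

@[fun_prop]
theorem pow (hf : IsSubtractionFree f) (n : ℕ) : IsSubtractionFree fun x => f x ^ n := by
  obtain ⟨p, q, hp, hq, hf⟩ := hf
  refine ⟨p ^ n, q ^ n, pow_ne_zero n hp, pow_ne_zero n hq, fun x hx => ?_⟩
  simp only [hf x hx, div_pow, map_pow]

@[fun_prop]
theorem add [IsStrictOrderedRing K] (hf : IsSubtractionFree f) (hg : IsSubtractionFree g) :
    IsSubtractionFree fun x => f x + g x := by
  obtain ⟨p₁, q₁, hp₁, hq₁, hf⟩ := hf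
  obtain ⟨p₂, q₂, -, hq₂, hg⟩ := hg
  refine ⟨p₁ * q₂ + q₁ * p₂, q₁ * q₂, mvPolynomial_add_ne_zero_of_left (mul_ne_zero hp₁ hq₂) _,
    mul_ne_zero hq₁ hq₂, fun x hx => ?_⟩
  have hx₁ : aeval x q₁ ≠ 0 := (mvPolynomial_aeval_pos hq₁ hx).ne'
  have hx₂ : aeval x q₂ ≠ 0 := (mvPolynomial_aeval_pos hq₂ hx).ne'
  simp only [hf x hx, hg x hx, div_add_div _ _ hx₁ hx₂, map_add, map_mul]

theorem exists_eq_eval_div_eval [IsStrictOrderedRing K] (hf : IsSubtractionFree f) :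
    ∃ p q : MvPolynomial σ K, p ≠ 0 ∧ q ≠ 0 ∧
      (∀ d, 0 ≤ coeff d p) ∧ (∀ d, 0 ≤ coeff d q) ∧
      ∀ x : σ → K, (∀ i, 0 < x i) → f x = eval x p / eval x q := by
  obtain ⟨p, q, hp, hq, hf⟩ := hf
  have map_ne_zero {r : MvPolynomial σ ℕ} (hr : r ≠ 0) : map (Nat.castRingHom K) r ≠ 0 :=
    (map_ne_zero_iff _ (map_injective _ Nat.cast_injective)).mpr hr
  have coeff_nonneg (r : MvPolynomial σ ℕ) (d : σ →₀ ℕ) :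
      0 ≤ coeff d (map (Nat.castRingHom K) r) := by
    rw [coeff_map]
    exact Nat.cast_nonneg _
  have eval_map_eq_aeval (r : MvPolynomial σ ℕ) (x : σ → K) :
      eval x (map (Nat.castRingHom K) r) = aeval x r := eval_map _ _ _
  refine ⟨_, _, map_ne_zero hp, map_ne_zero hq, coeff_nonneg p, coeff_nonneg q, fun x hx => ?_⟩
  rw [hf x hx, eval_map_eq_aeval, eval_map_eq_aeval]

end IsSubtractionFree

/-- A function of six arguments as a function of 6-tuples, the form in which being
subtraction-free is defined. -/
abbrev onCoords {α : Type*} (F : α → α → α → α → α → α → α) (x : Fin 6 → α) : α :=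
  F (x 0) (x 1) (x 2) (x 3) (x 4) (x 5)

@[fun_prop]
theorem isSubtractionFree_Xf1 : IsSubtractionFree (onCoords Xf1) := by
  unfold Xf1
  fun_prop

@[fun_prop]
theorem isSubtractionFree_Xf2 : IsSubtractionFree (onCoords Xf2) := by
  unfold Xf2
  fun_prop

@[fun_prop]
theorem isSubtractionFree_Mf : IsSubtractionFree (onCoords Mf) := by
  unfold Mf
  fun_prop

@[fun_prop]
theorem isSubtractionFree_Nf : IsSubtractionFree (onCoords Nf) := by
  unfold Nf
  fun_prop

@[fun_prop]
theorem isSubtractionFree_af : IsSubtractionFree (onCoords af) := by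
  unfold af
  fun_prop

@[fun_prop]
theorem isSubtractionFree_sy2 : IsSubtractionFree (onCoords sy2) := by
  unfold sy2
  fun_prop

@[fun_prop]
theorem isSubtractionFree_sy4 : IsSubtractionFree (onCoords sy4) := by
  unfold sy4
  fun_prop

theorem isSubtractionFree_sy0 : IsSubtractionFree (onCoords sy0) := by
  unfold sy0
  fun_prop

@[fun_prop]
theorem isSubtractionFree_sy1 : IsSubtractionFree (onCoords sy1) := by
  unfold sy1
  fun_prop

@[fun_prop]
theorem isSubtractionFree_sy3 : IsSubtractionFree (onCoords sy3) := by
  unfold sy3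
  fun_prop

theorem isSubtractionFree_sy5 : IsSubtractionFree (onCoords sy5) := by
  unfold sy5
  fun_prop

@[fun_prop]
theorem isSubtractionFree_Ybar1 : IsSubtractionFree (onCoords Ybar1) := by
  unfold Ybar1
  fun_prop

@[fun_prop]
theorem isSubtractionFree_Ybar2 : IsSubtractionFree (onCoords Ybar2) := by
  unfold Ybar2
  fun_prop

@[fun_prop]
theorem isSubtractionFree_Ybar3 : IsSubtractionFree (onCoords Ybar3) := by
  unfold Ybar3
  fun_prop

@[fun_prop]
theorem isSubtractionFree_Pbar : IsSubtractionFree (onCoords Pbar) := by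
  unfold Pbar
  fun_prop

theorem isSubtractionFree_invx0 : IsSubtractionFree (onCoords invx0) := by
  unfold invx0
  fun_prop

@[fun_prop]
theorem isSubtractionFree_invx1 : IsSubtractionFree (onCoords invx1) := by
  unfold invx1
  fun_prop

theorem isSubtractionFree_invx2 : IsSubtractionFree (onCoords invx2) := by
  unfold invx2
  fun_prop

theorem isSubtractionFree_invx4 : IsSubtractionFree (onCoords invx4) := by
  unfold invx4
  fun_prop

@[fun_prop]
theorem isSubtractionFree_invx3 : IsSubtractionFree (onCoords invx3) := by
  unfold invx3
  fun_prop

theorem isSubtractionFree_invx5 : IsSubtractionFree (onCoords invx5) := by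
  unfold invx5
  fun_prop

theorem sigma_bipositive_general :
    (∀ j, IsSubtractionFree fun x => sigVec x j) ∧ ∀ j, IsSubtractionFree fun y => invVec y j := by
  constructor <;> intro j <;> fin_cases j
  exacts [isSubtractionFree_sy0, isSubtractionFree_sy1, isSubtractionFree_sy2,
    isSubtractionFree_sy3, isSubtractionFree_sy4, isSubtractionFree_sy5,
    isSubtractionFree_invx0, isSubtractionFree_invx1, isSubtractionFree_invx2,
    isSubtractionFree_invx3, isSubtractionFree_invx4, isSubtractionFree_invx5]

/-- Bi-positivity of `σ̄`: every component of `σ̄` and of `σ̄⁻¹` is a ratio of two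
nonzero polynomials with nonnegative coefficients. -/
theorem sigma_bipositive :
    (∀ j : Fin 6, ∃ g h : MvPolynomial (Fin 6) ℝ, g ≠ 0 ∧ h ≠ 0 ∧
      (∀ d, 0 ≤ MvPolynomial.coeff d g) ∧ (∀ d, 0 ≤ MvPolynomial.coeff d h) ∧
      ∀ x : Fin 6 → ℝ, (∀ i, 0 < x i) →
        sigVec x j = MvPolynomial.eval x g / MvPolynomial.eval x h) ∧
    (∀ j : Fin 6, ∃ g h : MvPolynomial (Fin 6) ℝ, g ≠ 0 ∧ h ≠ 0 ∧
      (∀ d, 0 ≤ MvPolynomial.coeff d g) ∧ (∀ d, 0 ≤ MvPolynomial.coeff d h) ∧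
      ∀ y : Fin 6 → ℝ, (∀ i, 0 < y i) →
        invVec y j = MvPolynomial.eval y g / MvPolynomial.eval y h) :=
  ⟨fun j => (sigma_bipositive_general.1 j).exists_eq_eval_div_eval,
    fun j => (sigma_bipositive_general.2 j).exists_eq_eval_div_eval⟩
end

section
/- One-parameter action property (part of the geometric crystal axioms in Theorem 5.3): for all c, c', x0,...,x5 ∈ ℝ_{>0} one has e1^c(e1^{c'}(x)) = e1^{cc'}(x), e2^c(e2^{c'}(x)) = e2^{cc'}(x), e0^c(e0^{c'}(x)) = e0^{cc'}(x), and e1^1(x) = e2^1(x) = e0^1(x) = x. -/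
noncomputable section

/-- the action `e1^c` on `(x0,...,x5)` -/
def e1act (c : ℝ) (x : Fin 6 → ℝ) : Fin 6 → ℝ :=
  let x0 := x 0; let x1 := x 1; let x2 := x 2; let x3 := x 3; let x4 := x 4; let x5 := x 5
  let A1 := x0/x1 + x0*x2^3/(x1^2*x3) + x0*x2^3*x4^3/(x1^2*x3^2*x5)
  let B1 := c*x0/x1 + x0*x2^3/(x1^2*x3) + x0*x2^3*x4^3/(x1^2*x3^2*x5)
  let B3 := c*x0/x1 + c*x0*x2^3/(x1^2*x3) + x0*x2^3*x4^3/(x1^2*x3^2*x5)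
  ![x0, (B1/A1)*x1, x2, (B3/B1)*x3, x4, (c*A1/B3)*x5]

/-- the action `e2^c` on `(x0,...,x5)` -/
def e2act (c : ℝ) (x : Fin 6 → ℝ) : Fin 6 → ℝ :=
  let x0 := x 0; let x1 := x 1; let x2 := x 2; let x3 := x 3; let x4 := x 4; let x5 := x 5
  let A2 := x1/x2 + x1*x3/(x2^2*x4)
  let B2 := c*x1/x2 + x1*x3/(x2^2*x4)
  ![x0, x1, (B2/A2)*x2, x3, (c*A2/B2)*x4, x5]

end

noncomputable section

/-- the action `e0^c` on `(x0,...,x5)` -/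
def e0act (c : ℝ) (x : Fin 6 → ℝ) : Fin 6 → ℝ :=
  let x0 := x 0; let x1 := x 1; let x2 := x 2; let x3 := x 3; let x4 := x 4; let x5 := x 5
  let D := c^2*x0^2*x2^3*x3 + x1*x2^3*x3^2*x5
    + c*x0*(x1*x3^3 + 3*x1*x2*x3^2*x4 + 3*x1*x2^2*x3*x4^2 + x2^3*(x3^2 + x1*x4^3 + x1*x3*x5))
  let E := x0^2*x2^3*x3 + x1*x2^3*x3^2*x5
    + x0*(x1*x3^3 + 3*x1*x2*x3^2*x4 + 3*x1*x2^2*x3*x4^2 + x2^3*(x3^2 + x1*x4^3 + x1*x3*x5))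
  let F := c*x0^2*x2^3*x3 + x1*x2^3*x3^2*x5
    + x0*(c*x1*x3^3 + 3*c*x1*x2*x3^2*x4 + 3*c*x1*x2^2*x3*x4^2
        + x2^3*(x3^2 + c*x1*x4^3 + c*x1*x3*x5))
  let G := c*x0^2*x2^3*x3 + x1*x2^3*x3^2*x5
    + x0*(x1*x3^3 + (2+c)*x1*x2*x3^2*x4 + (1+2*c)*x1*x2^2*x3*x4^2
        + x2^3*(x3^2 + c*x1*x4^3 + c*x1*x3*x5))
  let H := c*x0^2*x2^3*x3 + x1*x2^3*x3^2*x5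
    + x0*(x1*x3^3 + 3*x1*x2*x3^2*x4 + 3*x1*x2^2*x3*x4^2 + x2^3*(x3^2 + x1*x4^3 + c*x1*x3*x5))
  ![D/(c*E)*x0, F/(c*E)*x1, G/(c*E)*x2, D*H/(c^2*E*F)*x3, D/(c*G)*x4, D/(c*H)*x5]

end

/-!
Each action rescales the coordinates of `x` by quotients of multiplicative cocycles, and rescaling
by a multiplicative cocycle is an action. Apart from `c` and `D / E`, the cocycles all have one
shape. Split a total `E = y₀ + ⋯ + yₙ₋₁` and let `N_k(c)` be the sum with the first `k` terms
multiplied by `c`. For `e₁` and `e₂` the terms are those of `A1` and `A2`; for `e₀` they split `E`,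
up to a monomial, into four terms with `N₁ = H`, `N₂ = G`, `N₃ = F`. In all three cases the action
of parameter `d` divides `y_j` by `ρ_j(d) ρ_{j+1}(d)`, where `ρ_k = N_k / E`. As
`(d - 1) y_j = N_{j+1}(d) - N_j(d)`, the rescaled sums telescope, which gives
`ρ_k(c d)(x) = ρ_k(c)(e^d x) ρ_k(d)(x)`.
-/

open Set

section Cocycle

variable {M X G : Type*} [Monoid M]

/-- The maps `e c`, for `c` in the submonoid `P`, preserve `S` and act on it: `e` restricts to an
action of `P` on `S`. -/
structure IsActionOn (e : M → X → X) (P : Submonoid M) (S : Set X) : Prop where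
  mapsTo : ∀ c ∈ P, MapsTo (e c) S S
  one_apply : ∀ x ∈ S, e 1 x = x
  mul_apply : ∀ c ∈ P, ∀ d ∈ P, ∀ x ∈ S, e (c * d) x = e c (e d x)

/-- A multiplicative cocycle over the family of maps `e`, with parameters in `P` and base points in
`S`; `e` itself is not required to be an action. -/
structure IsCocycleOn [Monoid G] (e : M → X → X) (P : Submonoid M) (S : Set X)
    (f : M → X → G) : Prop where
  map_one : ∀ x ∈ S, f 1 x = 1
  map_mul : ∀ c ∈ P, ∀ d ∈ P, ∀ x ∈ S, f (c * d) x = f c (e d x) * f d x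

theorem IsCocycleOn.isActionOn [Monoid G] {e : M → G → G} {P : Submonoid M} {S : Set G}
    {f : M → G → G} (hf : IsCocycleOn e P S f) (hS : ∀ c ∈ P, MapsTo (e c) S S)
    (he : ∀ c ∈ P, ∀ x ∈ S, e c x = f c x * x) : IsActionOn e P S where
  mapsTo := hS
  one_apply x hx := by rw [he 1 P.one_mem x hx, hf.map_one x hx, one_mul]
  mul_apply c hc d hd x hx := by
    rw [he c hc _ (hS d hd hx), he d hd x hx, he _ (P.mul_mem hc hd) x hx,
      hf.map_mul c hc d hd x hx, he d hd x hx, mul_assoc]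

namespace IsCocycleOn

variable {e : M → X → X} {P : Submonoid M} {S : Set X}

theorem of_monoidHom [Monoid G] (χ : M →* G) : IsCocycleOn e P S (fun c _ ↦ χ c) where
  map_one _ _ := χ.map_one
  map_mul _ _ _ _ _ _ := χ.map_mul _ _

protected theorem one [Monoid G] : IsCocycleOn e P S (fun _ _ ↦ (1 : G)) :=
  of_monoidHom 1

protected theorem id : IsCocycleOn e P S (fun c _ ↦ c) :=
  of_monoidHom (MonoidHom.id M)

protected theorem mul [CommMonoid G] {f g : M → X → G} (hf : IsCocycleOn e P S f)
    (hg : IsCocycleOn e P S g) : IsCocycleOn e P S (fun c x ↦ f c x * g c x) where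
  map_one x hx := by rw [hf.map_one x hx, hg.map_one x hx, one_mul]
  map_mul c hc d hd x hx := by
    rw [hf.map_mul c hc d hd x hx, hg.map_mul c hc d hd x hx, mul_mul_mul_comm]

protected theorem div [DivisionCommMonoid G] {f g : M → X → G} (hf : IsCocycleOn e P S f)
    (hg : IsCocycleOn e P S g) : IsCocycleOn e P S (fun c x ↦ f c x / g c x) where
  map_one x hx := by rw [hf.map_one x hx, hg.map_one x hx, div_one]
  map_mul c hc d hd x hx := by
    rw [hf.map_mul c hc d hd x hx, hg.map_mul c hc d hd x hx, mul_div_mul_comm]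

protected theorem pi {ι : Type*} {A : ι → Type*} [∀ i, Monoid (A i)] {f : M → X → ∀ i, A i}
    (hf : ∀ i, IsCocycleOn e P S (fun c x ↦ f c x i)) : IsCocycleOn e P S f where
  map_one x hx := funext fun i ↦ (hf i).map_one x hx
  map_mul c hc d hd x hx := funext fun i ↦ (hf i).map_mul c hc d hd x hx

end IsCocycleOn

end Cocycle

section PartialSum

variable {A : Type*} [AddCommMonoid A] {n : ℕ}

theorem sum_pos_of_pos [PartialOrder A] [IsOrderedCancelAddMonoid A] [NeZero n] {y : Fin n → A}
    (hy : ∀ j, 0 < y j) : 0 < ∑ j, y j :=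
  Finset.sum_pos (fun j _ ↦ hy j) Finset.univ_nonempty

theorem partialSum_last (y : Fin n → A) : Fin.partialSum y (Fin.last n) = ∑ j, y j := by
  rw [Fin.partialSum, Fin.val_last, List.take_of_length_le (List.length_ofFn).le, List.sum_ofFn]

theorem partialSum_one (y : Fin (n + 1) → A) : Fin.partialSum y 1 = y 0 := by
  simp [Fin.partialSum]

theorem partialSum_two (y : Fin (n + 2) → A) : Fin.partialSum y 2 = y 0 + y 1 := by
  simp [Fin.partialSum, Nat.mod_eq_of_lt (show 2 < n + 2 + 1 by lia)]

theorem partialSum_three (y : Fin (n + 3) → A) : Fin.partialSum y 3 = y 0 + y 1 + y 2 := by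
  simp [Fin.partialSum, Nat.mod_eq_of_lt (show 3 < n + 3 + 1 by lia), add_assoc]

end PartialSum

section PrefixRatio

variable {K : Type*} [Field K] {n : ℕ}

/-- The ratio by which the sum of `y` grows when its first `k` terms are multiplied by `c`. -/
def prefixRatio (y : Fin n → K) (c : K) (k : Fin (n + 1)) : K :=
  1 + (c - 1) * (Fin.partialSum y k / ∑ j, y j)

theorem prefixRatio_param_one (y : Fin n → K) (k : Fin (n + 1)) : prefixRatio y 1 k = 1 := by
  rw [prefixRatio, sub_self, zero_mul, add_zero]

theorem prefixRatio_zero (y : Fin n → K) (c : K) : prefixRatio y c 0 = 1 := by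
  rw [prefixRatio, Fin.partialSum_zero, zero_div, mul_zero, add_zero]

theorem prefixRatio_last {y : Fin n → K} (hy : ∑ j, y j ≠ 0) (c : K) :
    prefixRatio y c (Fin.last n) = c := by
  rw [prefixRatio, partialSum_last, div_self hy, mul_one, add_sub_cancel]

theorem prefixRatio_pos [LinearOrder K] [IsStrictOrderedRing K] {y : Fin n → K}
    (hy : ∀ j, 0 < y j) {c : K} (hc : 0 < c) (k : Fin (n + 1)) : 0 < prefixRatio y c k := by
  have mono : Monotone (Fin.partialSum y) := Fin.monotone_iff_le_succ.2 fun i ↦ by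
    rw [Fin.partialSum_succ]
    exact le_add_of_nonneg_right (hy i).le
  have h_nonneg : 0 ≤ Fin.partialSum y k := Fin.partialSum_zero y ▸ mono (Fin.zero_le k)
  have h_le : Fin.partialSum y k ≤ ∑ j, y j := partialSum_last y ▸ mono (Fin.le_last k)
  have t_nonneg : 0 ≤ Fin.partialSum y k / ∑ j, y j := div_nonneg h_nonneg (h_nonneg.trans h_le)
  have t_le_one : Fin.partialSum y k / ∑ j, y j ≤ 1 := div_le_one_of_le₀ h_le (h_nonneg.trans h_le)
  rw [prefixRatio]
  rcases t_nonneg.eq_or_lt with t_zero | t_pos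
  · rw [← t_zero, mul_zero, add_zero]
    exact one_pos
  · linarith [mul_pos hc t_pos]

section Rescaled

variable {y y' : Fin n → K} {d : K} (hρ : ∀ k, prefixRatio y d k ≠ 0)
  (hy' : ∀ j, y' j = y j / (prefixRatio y d j.castSucc * prefixRatio y d j.succ))

include hρ hy'

theorem partialSum_of_rescaled (k : Fin (n + 1)) :
    Fin.partialSum y' k = Fin.partialSum y k / prefixRatio y d k := by
  induction k using Fin.induction with
  | zero => simp only [Fin.partialSum_zero, zero_div]
  | succ i ih =>
    have h₀ := hρ i.castSucc
    have h₁ := hρ i.succ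
    rw [Fin.partialSum_succ, Fin.partialSum_succ, ih, hy']
    field_simp
    rw [prefixRatio, prefixRatio, Fin.partialSum_succ]
    ring

variable (hy : ∑ j, y j ≠ 0)

include hy

theorem sum_of_rescaled : ∑ j, y' j = (∑ j, y j) / d := by
  rw [← partialSum_last, partialSum_of_rescaled hρ hy', partialSum_last, prefixRatio_last hy]

theorem prefixRatio_mul_of_rescaled (c : K) (k : Fin (n + 1)) :
    prefixRatio y (c * d) k = prefixRatio y' c k * prefixRatio y d k := by
  have hk := hρ k
  have h_split : prefixRatio y' c k * prefixRatio y d k =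
      prefixRatio y d k + (c - 1) * (d * (Fin.partialSum y k / ∑ j, y j)) := by
    rw [prefixRatio.eq_1 y', partialSum_of_rescaled hρ hy', sum_of_rescaled hρ hy' hy]
    field_simp
  rw [h_split, prefixRatio, prefixRatio]
  ring

end Rescaled

theorem isCocycleOn_prefixRatio {X : Type*} {e : K → X → X} {P : Submonoid K} {S : Set X}
    {y : X → Fin n → K} (hy : ∀ x ∈ S, ∑ j, y x j ≠ 0)
    (hρ : ∀ d ∈ P, ∀ x ∈ S, ∀ k, prefixRatio (y x) d k ≠ 0)
    (hye : ∀ d ∈ P, ∀ x ∈ S, ∀ j,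
      y (e d x) j = y x j / (prefixRatio (y x) d j.castSucc * prefixRatio (y x) d j.succ))
    (k : Fin (n + 1)) : IsCocycleOn e P S (fun c x ↦ prefixRatio (y x) c k) where
  map_one x _ := prefixRatio_param_one (y x) k
  map_mul c _ d hd x hx :=
    prefixRatio_mul_of_rescaled (hρ d hd x hx) (hye d hd x hx) (hy x hx) c k

end PrefixRatio

section PositiveOrthant

/-- The vectors with positive coordinates. -/
def positiveOrthant (ι K : Type*) [Zero K] [LT K] : Set (ι → K) := {x | ∀ i, 0 < x i}

variable {ι K : Type*} [Field K] [LinearOrder K] [IsStrictOrderedRing K]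

theorem IsCocycleOn.isActionOn_positiveOrthant {e f : K → (ι → K) → ι → K}
    (hf : IsCocycleOn e (Submonoid.pos K) (positiveOrthant ι K) f)
    (hpos : ∀ c ∈ Submonoid.pos K, ∀ x ∈ positiveOrthant ι K, f c x ∈ positiveOrthant ι K)
    (he : ∀ c ∈ Submonoid.pos K, ∀ x ∈ positiveOrthant ι K, e c x = f c x * x) :
    IsActionOn e (Submonoid.pos K) (positiveOrthant ι K) :=
  hf.isActionOn
    (fun c hc x hx i ↦ by rw [he c hc x hx]; exact mul_pos (hpos c hc x hx i) (hx i)) he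

theorem isCocycleOn_prefixRatio_of_pos {X : Type*} {n : ℕ} [NeZero n] {e : K → X → X} {S : Set X}
    {y : X → Fin n → K} (hy : ∀ x ∈ S, ∀ j, 0 < y x j)
    (hye : ∀ d ∈ Submonoid.pos K, ∀ x ∈ S, ∀ j,
      y (e d x) j = y x j / (prefixRatio (y x) d j.castSucc * prefixRatio (y x) d j.succ))
    (k : Fin (n + 1)) :
    IsCocycleOn e (Submonoid.pos K) S (fun c x ↦ prefixRatio (y x) c k) :=
  isCocycleOn_prefixRatio
    (fun x hx ↦ (sum_pos_of_pos (hy x hx)).ne')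
    (fun _ hd x hx k ↦ (prefixRatio_pos (hy x hx) hd k).ne') hye k

end PositiveOrthant

noncomputable section

variable {x : Fin 6 → ℝ}

section E1

/-- The summands of `A1`. -/
def e1Terms (x : Fin 6 → ℝ) : Fin 3 → ℝ :=
  ![x 0 / x 1, x 0 * x 2 ^ 3 / (x 1 ^ 2 * x 3),
    x 0 * x 2 ^ 3 * x 4 ^ 3 / (x 1 ^ 2 * x 3 ^ 2 * x 5)]

/-- The factors by which `e1act c` multiplies the coordinates: the paper's `C1`, `C3`, `C5` in the
odd positions, with `C1` and `C1 * C3` as prefix ratios. -/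
def e1Factor (c : ℝ) (x : Fin 6 → ℝ) : Fin 6 → ℝ :=
  ![1, prefixRatio (e1Terms x) c 1, 1,
    prefixRatio (e1Terms x) c 2 / prefixRatio (e1Terms x) c 1, 1,
    c / prefixRatio (e1Terms x) c 2]

theorem e1Terms_mul {α : ℝ} (hα : α ≠ 0) (β d : ℝ) (x : Fin 6 → ℝ) :
    e1Terms (![1, α, 1, β / α, 1, d / β] * x) =
      ![e1Terms x 0 / α, e1Terms x 1 / (α * β), e1Terms x 2 / (β * d)] := by
  ext j
  fin_cases j <;>
    simp only [e1Terms, Fin.zero_eta, Fin.mk_one, Fin.reduceFinMk, Pi.mul_apply, Matrix.cons_val,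
      one_mul] <;>
    field_simp

variable (hx : x ∈ positiveOrthant (Fin 6) ℝ)

include hx

theorem e1Terms_pos (j : Fin 3) : 0 < e1Terms x j := by
  have h₀ := hx 0; have h₁ := hx 1; have h₂ := hx 2
  have h₃ := hx 3; have h₄ := hx 4; have h₅ := hx 5
  fin_cases j <;>
    simp only [e1Terms, Fin.zero_eta, Fin.mk_one, Fin.reduceFinMk, Matrix.cons_val] <;>
    positivity

theorem e1act_eq_e1Factor_mul (c : ℝ) : e1act c x = e1Factor c x * x := by
  have hS := sum_pos_of_pos (e1Terms_pos hx)
  unfold e1act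
  extract_lets x0 x1 x2 x3 x4 x5 A1 B1 B3
  have hA1 : A1 = ∑ j, e1Terms x j := by
    rw [Fin.sum_univ_three]
    rfl
  have hB1 : B1 = (∑ j, e1Terms x j) * prefixRatio (e1Terms x) c 1 := by
    rw [prefixRatio, partialSum_one]
    field_simp
    simp only [Fin.sum_univ_three, e1Terms, Matrix.cons_val, B1, x0, x1, x2, x3, x4, x5]
    ring
  have hB3 : B3 = (∑ j, e1Terms x j) * prefixRatio (e1Terms x) c 2 := by
    rw [prefixRatio, partialSum_two]
    field_simp
    simp only [Fin.sum_univ_three, e1Terms, Matrix.cons_val, B3, x0, x1, x2, x3, x4, x5]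
    ring
  rw [hA1, hB1, hB3]
  ext i
  fin_cases i <;>
    simp only [e1Factor, Fin.zero_eta, Fin.mk_one, Fin.reduceFinMk, Pi.mul_apply, Matrix.cons_val,
      x0, x1, x2, x3, x4, x5] <;>
    field_simp

theorem e1Terms_e1act {d : ℝ} (hd : 0 < d) (j : Fin 3) :
    e1Terms (e1act d x) j =
      e1Terms x j / (prefixRatio (e1Terms x) d j.castSucc * prefixRatio (e1Terms x) d j.succ) := by
  have hρ := (prefixRatio_pos (e1Terms_pos hx) hd 1).ne'
  have h_first := prefixRatio_zero (e1Terms x) d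
  have h_last : prefixRatio (e1Terms x) d 3 = d :=
    prefixRatio_last (sum_pos_of_pos (e1Terms_pos hx)).ne' d
  rw [e1act_eq_e1Factor_mul hx d, e1Factor, e1Terms_mul hρ]
  fin_cases j <;> simp [h_first, h_last]

omit hx in
theorem isActionOn_e1act : IsActionOn e1act (Submonoid.pos ℝ) (positiveOrthant (Fin 6) ℝ) := by
  have hρ := isCocycleOn_prefixRatio_of_pos (fun _ hx ↦ e1Terms_pos hx)
    (fun _ hd _ hx ↦ e1Terms_e1act hx hd)
  refine IsCocycleOn.isActionOn_positiveOrthant (f := e1Factor) (.pi fun i ↦ ?_)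
    (fun c (hc : 0 < c) x hx i ↦ ?_) (fun c _ _ hx ↦ e1act_eq_e1Factor_mul hx c)
  · fin_cases i
    exacts [.one, hρ 1, .one, (hρ 2).div (hρ 1), .one, .div .id (hρ 2)]
  · have ρ_pos := prefixRatio_pos (e1Terms_pos hx) hc
    fin_cases i
    exacts [one_pos, ρ_pos 1, one_pos, div_pos (ρ_pos 2) (ρ_pos 1), one_pos,
      div_pos hc (ρ_pos 2)]

end E1

section E2

/-- The summands of `A2`. -/
def e2Terms (x : Fin 6 → ℝ) : Fin 2 → ℝ :=
  ![x 1 / x 2, x 1 * x 3 / (x 2 ^ 2 * x 4)]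

/-- The factors by which `e2act c` multiplies the coordinates; the paper's `C2` is a prefix
ratio. -/
def e2Factor (c : ℝ) (x : Fin 6 → ℝ) : Fin 6 → ℝ :=
  ![1, 1, prefixRatio (e2Terms x) c 1, 1, c / prefixRatio (e2Terms x) c 1, 1]

theorem e2Terms_mul (α d : ℝ) (x : Fin 6 → ℝ) :
    e2Terms (![1, 1, α, 1, d / α, 1] * x) = ![e2Terms x 0 / α, e2Terms x 1 / (α * d)] := by
  ext j
  fin_cases j <;>
    simp only [e2Terms, Fin.zero_eta, Fin.mk_one, Pi.mul_apply, Matrix.cons_val,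
      one_mul] <;>
    field_simp

variable (hx : x ∈ positiveOrthant (Fin 6) ℝ)

include hx

theorem e2Terms_pos (j : Fin 2) : 0 < e2Terms x j := by
  have h₁ := hx 1; have h₂ := hx 2; have h₃ := hx 3; have h₄ := hx 4
  fin_cases j <;>
    simp only [e2Terms, Fin.zero_eta, Fin.mk_one, Matrix.cons_val] <;>
    positivity

theorem e2act_eq_e2Factor_mul (c : ℝ) : e2act c x = e2Factor c x * x := by
  have hS := sum_pos_of_pos (e2Terms_pos hx)
  unfold e2act
  extract_lets x0 x1 x2 x3 x4 x5 A2 B2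
  have hA2 : A2 = ∑ j, e2Terms x j := by
    rw [Fin.sum_univ_two]
    rfl
  have hB2 : B2 = (∑ j, e2Terms x j) * prefixRatio (e2Terms x) c 1 := by
    rw [prefixRatio, partialSum_one]
    field_simp
    simp only [Fin.sum_univ_two, e2Terms, Matrix.cons_val, B2, x1, x2, x3, x4]
    ring
  rw [hA2, hB2]
  ext i
  fin_cases i <;>
    simp only [e2Factor, Fin.zero_eta, Fin.mk_one, Fin.reduceFinMk, Pi.mul_apply, Matrix.cons_val,
      x0, x1, x2, x3, x4, x5] <;>
    field_simp

theorem e2Terms_e2act (d : ℝ) (j : Fin 2) :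
    e2Terms (e2act d x) j =
      e2Terms x j / (prefixRatio (e2Terms x) d j.castSucc * prefixRatio (e2Terms x) d j.succ) := by
  have h_first := prefixRatio_zero (e2Terms x) d
  have h_last : prefixRatio (e2Terms x) d 2 = d :=
    prefixRatio_last (sum_pos_of_pos (e2Terms_pos hx)).ne' d
  rw [e2act_eq_e2Factor_mul hx d, e2Factor, e2Terms_mul]
  fin_cases j <;> simp [h_first, h_last]

omit hx in
theorem isActionOn_e2act : IsActionOn e2act (Submonoid.pos ℝ) (positiveOrthant (Fin 6) ℝ) := by
  have hρ := isCocycleOn_prefixRatio_of_pos (fun _ hx ↦ e2Terms_pos hx)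
    (fun d _ _ hx ↦ e2Terms_e2act hx d) 1
  refine IsCocycleOn.isActionOn_positiveOrthant (f := e2Factor) (.pi fun i ↦ ?_)
    (fun c (hc : 0 < c) x hx i ↦ ?_) (fun c _ _ hx ↦ e2act_eq_e2Factor_mul hx c)
  · fin_cases i
    exacts [.one, .one, hρ, .one, .div .id hρ, .one]
  · have ρ_pos := prefixRatio_pos (e2Terms_pos hx) hc 1
    fin_cases i
    exacts [one_pos, one_pos, ρ_pos, one_pos, div_pos hc ρ_pos, one_pos]

end E2

section E0

/-- Four terms with sum `E / (x0^3 * x2^3 * x3)`. Their order makes the prefix ratios `H / E`,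
`G / E` and `F / E`; the denominator is the monomial for which `e0act` divides each term by the two
adjacent prefix ratios. -/
def e0Terms (x : Fin 6 → ℝ) : Fin 4 → ℝ :=
  ![(x 0 + x 1 * x 5) / x 0 ^ 2, x 1 * x 4 * (x 3 + x 2 * x 4) ^ 2 / (x 0 ^ 2 * x 2 ^ 2 * x 3),
    x 1 * (x 3 + x 2 * x 4) ^ 2 / (x 0 ^ 2 * x 2 ^ 3), x 3 * (x 0 + x 1 * x 5) / x 0 ^ 3]

/-- The ratio `D / E`: if `D = c^2 * a + c * w + b` then `E = a + w + b`, so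
`D = c * E + (c - 1) * (c * a - b)`. Here `a`, `b` and `E` are divided by `x0^3 * x2^3 * x3`. -/
def e0Ratio (c : ℝ) (x : Fin 6 → ℝ) : ℝ :=
  c + (c - 1) * ((c * (x 0)⁻¹ - x 1 * x 3 * x 5 / x 0 ^ 3) / ∑ j, e0Terms x j)

/-- The factors by which `e0act c` multiplies the coordinates. -/
def e0Factor (c : ℝ) (x : Fin 6 → ℝ) : Fin 6 → ℝ :=
  let ρ := prefixRatio (e0Terms x) c
  let δ := e0Ratio c x
  ![δ / c, ρ 3 / c, ρ 2 / c, δ * ρ 1 / (c ^ 2 * ρ 3), δ / (c * ρ 2), δ / (c * ρ 1)]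

theorem e0Terms_mul {η γ φ δ d : ℝ} (hη : η ≠ 0) (hγ : γ ≠ 0) (hφ : φ ≠ 0) (hδ : δ ≠ 0)
    (hd : d ≠ 0) (h_x3 : η * x 3 + φ * (x 2 * x 4) = γ * (x 3 + x 2 * x 4))
    (h_x0 : d * η * x 0 + φ * (x 1 * x 5) = δ * (x 0 + x 1 * x 5)) :
    e0Terms (![δ / d, φ / d, γ / d, δ * η / (d ^ 2 * φ), δ / (d * γ), δ / (d * η)] * x) =
      ![e0Terms x 0 / η, e0Terms x 1 / (η * γ), e0Terms x 2 / (γ * φ), e0Terms x 3 / (φ * d)] := by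
  have h_x3' : δ * η / (d ^ 2 * φ) * x 3 + γ / d * x 2 * (δ / (d * γ) * x 4) =
      δ * γ / (d ^ 2 * φ) * (x 3 + x 2 * x 4) := by
    field_simp
    linear_combination h_x3
  have h_x0' : δ / d * x 0 + φ / d * x 1 * (δ / (d * η) * x 5) =
      δ ^ 2 / (d ^ 2 * η) * (x 0 + x 1 * x 5) := by
    field_simp
    linear_combination h_x0
  ext j
  fin_cases j <;>
    simp only [e0Terms, Fin.zero_eta, Fin.mk_one, Fin.reduceFinMk, Pi.mul_apply, Matrix.cons_val,
      h_x3', h_x0'] <;>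
    field_simp

variable (hx : x ∈ positiveOrthant (Fin 6) ℝ)

include hx

theorem e0Terms_pos (j : Fin 4) : 0 < e0Terms x j := by
  have h₀ := hx 0; have h₁ := hx 1; have h₂ := hx 2
  have h₃ := hx 3; have h₄ := hx 4; have h₅ := hx 5
  fin_cases j <;>
    simp only [e0Terms, Fin.zero_eta, Fin.mk_one, Fin.reduceFinMk, Matrix.cons_val] <;>
    positivity

theorem e0Ratio_pos {c : ℝ} (hc : 0 < c) : 0 < e0Ratio c x := by
  have h₀ := hx 0; have h₁ := hx 1; have h₃ := hx 3; have h₅ := hx 5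
  have hS := sum_pos_of_pos (e0Terms_pos hx)
  have hy₁ := e0Terms_pos hx 1; have hy₂ := e0Terms_pos hx 2
  have quadratic : e0Ratio c x = (c ^ 2 * (x 0)⁻¹ +
      c * (x 1 * x 5 / x 0 ^ 2 + x 3 / x 0 ^ 2 + e0Terms x 1 + e0Terms x 2) +
      x 1 * x 3 * x 5 / x 0 ^ 3) / ∑ j, e0Terms x j := by
    have ends : e0Terms x 0 + e0Terms x 3 =
        (x 0)⁻¹ + x 1 * x 5 / x 0 ^ 2 + x 3 / x 0 ^ 2 + x 1 * x 3 * x 5 / x 0 ^ 3 := by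
      simp only [e0Terms, Matrix.cons_val]
      field_simp
      ring
    rw [e0Ratio, eq_div_iff hS.ne', add_mul, mul_assoc (c - 1), div_mul_cancel₀ _ hS.ne',
      Fin.sum_univ_four]
    linear_combination c * ends
  rw [quadratic]
  positivity

theorem e0act_eq_e0Factor_mul (c : ℝ) : e0act c x = e0Factor c x * x := by
  have h₀ := hx 0; have h₂ := hx 2; have h₃ := hx 3
  have hS := sum_pos_of_pos (e0Terms_pos hx)
  unfold e0act
  extract_lets x0 x1 x2 x3 x4 x5 D E F G H
  have hE : E = x 0 ^ 3 * x 2 ^ 3 * x 3 * ∑ j, e0Terms x j := by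
    simp only [Fin.sum_univ_four, e0Terms, Matrix.cons_val, E, x0, x1, x2, x3, x4, x5]
    field_simp
    ring
  have hE_pos : 0 < E := hE ▸ by positivity
  have hD : D = E * e0Ratio c x := by
    rw [hE, e0Ratio]
    field_simp
    simp only [Fin.sum_univ_four, e0Terms, Matrix.cons_val, D, x0, x1, x2, x3, x4, x5]
    field_simp
    ring
  obtain ⟨hH, hG, hF⟩ : H = E * prefixRatio (e0Terms x) c 1 ∧
      G = E * prefixRatio (e0Terms x) c 2 ∧ F = E * prefixRatio (e0Terms x) c 3 := by
    simp only [prefixRatio, partialSum_one, partialSum_two, partialSum_three]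
    rw [hE]
    refine ⟨?_, ?_, ?_⟩ <;>
      field_simp <;>
      simp only [Fin.sum_univ_four, e0Terms, Matrix.cons_val, F, G, H, x0, x1, x2, x3, x4, x5] <;>
      field_simp <;>
      ring
  rw [hD, hF, hG, hH]
  ext i
  fin_cases i <;>
    simp only [e0Factor, Fin.zero_eta, Fin.mk_one, Fin.reduceFinMk, Pi.mul_apply, Matrix.cons_val,
      x0, x1, x2, x3, x4, x5] <;>
    field_simp

theorem prefixRatio_e0Terms_two_weighted_mean (d : ℝ) :
    prefixRatio (e0Terms x) d 1 * x 3 + prefixRatio (e0Terms x) d 3 * (x 2 * x 4) =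
      prefixRatio (e0Terms x) d 2 * (x 3 + x 2 * x 4) := by
  have h₃ := hx 3
  have h_ratio : e0Terms x 1 * x 3 = e0Terms x 2 * (x 2 * x 4) := by
    simp only [e0Terms, Matrix.cons_val]
    field_simp
  simp only [prefixRatio, partialSum_one, partialSum_two, partialSum_three]
  linear_combination (1 - d) / (∑ j, e0Terms x j) * h_ratio

theorem e0Ratio_weighted_mean (d : ℝ) :
    d * prefixRatio (e0Terms x) d 1 * x 0 + prefixRatio (e0Terms x) d 3 * (x 1 * x 5) =
      e0Ratio d x * (x 0 + x 1 * x 5) := by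
  have hS := sum_pos_of_pos (e0Terms_pos hx)
  simp only [prefixRatio, e0Ratio, partialSum_one, partialSum_three]
  field_simp
  simp only [e0Terms, Fin.sum_univ_four, Matrix.cons_val]
  field_simp
  ring

theorem e0Terms_e0act {d : ℝ} (hd : 0 < d) (j : Fin 4) :
    e0Terms (e0act d x) j =
      e0Terms x j / (prefixRatio (e0Terms x) d j.castSucc * prefixRatio (e0Terms x) d j.succ) := by
  have hρ := fun k ↦ (prefixRatio_pos (e0Terms_pos hx) hd k).ne'
  have h_first := prefixRatio_zero (e0Terms x) d
  have h_last : prefixRatio (e0Terms x) d 4 = d :=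
    prefixRatio_last (sum_pos_of_pos (e0Terms_pos hx)).ne' d
  rw [e0act_eq_e0Factor_mul hx d, e0Factor, e0Terms_mul (hρ 1) (hρ 2) (hρ 3)
    (e0Ratio_pos hx hd).ne' hd.ne' (prefixRatio_e0Terms_two_weighted_mean hx d)
    (e0Ratio_weighted_mean hx d)]
  fin_cases j <;> simp [h_first, h_last]

theorem e0Ratio_mul (c : ℝ) {d : ℝ} (hd : 0 < d) :
    e0Ratio (c * d) x = e0Ratio c (e0act d x) * e0Ratio d x := by
  have hS := sum_pos_of_pos (e0Terms_pos hx)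
  have ρ_pos := prefixRatio_pos (e0Terms_pos hx) hd
  have hρ₁ := ρ_pos 1; have hρ₃ := ρ_pos 3
  have hδ := e0Ratio_pos hx hd
  have sum_e0act : ∑ j, e0Terms (e0act d x) j = (∑ j, e0Terms x j) / d :=
    sum_of_rescaled (fun k ↦ (ρ_pos k).ne') (e0Terms_e0act hx hd) hS.ne'
  have leading : (e0act d x 0)⁻¹ = d / e0Ratio d x * (x 0)⁻¹ := by
    simp only [e0act_eq_e0Factor_mul hx d, e0Factor, Pi.mul_apply, Matrix.cons_val]
    field_simp
  have constant : e0act d x 1 * e0act d x 3 * e0act d x 5 / e0act d x 0 ^ 3 =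
      x 1 * x 3 * x 5 / x 0 ^ 3 / (d * e0Ratio d x) := by
    simp only [e0act_eq_e0Factor_mul hx d, e0Factor, Pi.mul_apply, Matrix.cons_val]
    field_simp
  rw [e0Ratio.eq_1 c, sum_e0act, leading, constant, add_mul]
  have rescaled_quotient :
      (c * (d / e0Ratio d x * (x 0)⁻¹) - x 1 * x 3 * x 5 / x 0 ^ 3 / (d * e0Ratio d x)) /
          ((∑ j, e0Terms x j) / d) * e0Ratio d x =
        (c * d ^ 2 * (x 0)⁻¹ - x 1 * x 3 * x 5 / x 0 ^ 3) / ∑ j, e0Terms x j := by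
    field_simp
  rw [mul_assoc (c - 1), rescaled_quotient, e0Ratio, e0Ratio]
  ring

omit hx in
theorem isCocycleOn_e0Ratio :
    IsCocycleOn e0act (Submonoid.pos ℝ) (positiveOrthant (Fin 6) ℝ) e0Ratio where
  map_one x _ := by rw [e0Ratio, sub_self, zero_mul, add_zero]
  map_mul c _ _ hd _ hx := e0Ratio_mul hx c hd

omit hx in
theorem isActionOn_e0act : IsActionOn e0act (Submonoid.pos ℝ) (positiveOrthant (Fin 6) ℝ) := by
  have hδ := isCocycleOn_e0Ratio
  have hρ := isCocycleOn_prefixRatio_of_pos (fun _ hx ↦ e0Terms_pos hx)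
    (fun _ hd _ hx ↦ e0Terms_e0act hx hd)
  have hc := IsCocycleOn.id (e := e0act) (P := Submonoid.pos ℝ) (S := positiveOrthant (Fin 6) ℝ)
  have hc_sq : IsCocycleOn e0act (Submonoid.pos ℝ) (positiveOrthant (Fin 6) ℝ) (fun c _ ↦ c ^ 2) :=
    .of_monoidHom (powMonoidHom 2)
  refine IsCocycleOn.isActionOn_positiveOrthant (f := e0Factor) (.pi fun i ↦ ?_)
    (fun c (hc : 0 < c) x hx i ↦ ?_) (fun c _ _ hx ↦ e0act_eq_e0Factor_mul hx c)
  · fin_cases i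
    exacts [hδ.div hc, (hρ 3).div hc, (hρ 2).div hc, (hδ.mul (hρ 1)).div (hc_sq.mul (hρ 3)),
      hδ.div (hc.mul (hρ 2)), hδ.div (hc.mul (hρ 1))]
  · have δ_pos := e0Ratio_pos hx hc
    have ρ_pos := prefixRatio_pos (e0Terms_pos hx) hc
    fin_cases i
    exacts [div_pos δ_pos hc, div_pos (ρ_pos 3) hc, div_pos (ρ_pos 2) hc,
      div_pos (mul_pos δ_pos (ρ_pos 1)) (mul_pos (pow_pos hc 2) (ρ_pos 3)),
      div_pos δ_pos (mul_pos hc (ρ_pos 2)), div_pos δ_pos (mul_pos hc (ρ_pos 1))]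

end E0

end

/-- One-parameter action property of `e0, e1, e2`. -/
theorem e_actions_one_parameter (c c' : ℝ) (hc : 0 < c) (hc' : 0 < c')
    (x : Fin 6 → ℝ) (hx : ∀ i, 0 < x i) :
    e1act c (e1act c' x) = e1act (c*c') x ∧
    e2act c (e2act c' x) = e2act (c*c') x ∧
    e0act c (e0act c' x) = e0act (c*c') x ∧
    e1act 1 x = x ∧ e2act 1 x = x ∧ e0act 1 x = x := by
  have h₀ := isActionOn_e0act
  have h₁ := isActionOn_e1act
  have h₂ := isActionOn_e2act
  exact ⟨(h₁.mul_apply c hc c' hc' x hx).symm, (h₂.mul_apply c hc c' hc' x hx).symm,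
    (h₀.mul_apply c hc c' hc' x hx).symm, h₁.one_apply x hx, h₂.one_apply x hx, h₀.one_apply x hx⟩
end

section
/- Verma relation between e0 and e1 (case a01 = a10 = -1 of the geometric crystal axioms in Theorem 5.3): for all c1, c2, x0,...,x5 ∈ ℝ_{>0} one has e0^{c1}(e1^{c1c2}(e0^{c2}(x))) = e1^{c2}(e0^{c1c2}(e1^{c1}(x))). -/
/-! Encode a positive point `x` by a `3 × 3` matrix `M(x)` from which it can be recovered, and on
which `e₀ᶜ` acts as left multiplication by the transvection `T₀₁((c - 1) / ε₀(x))` and `e₁ᶜ` by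
`T₁₂((c - 1) / ε₁(x))`. The Verma relation then becomes the braid identity
`T₀₁(b₃) T₁₂(a₂) T₀₁(b₁) = T₁₂(a₃) T₀₁(b₂) T₁₂(a₁)`. Its parameters match because
`ε₀ ε₁ = ρ₀ + ρ₁`, where `e₀ᶜ` divides `ε₀` and `ρ₀` by `c` and fixes `ρ₁`, while `e₁ᶜ` divides
`ε₁` and `ρ₁` by `c` and fixes `ρ₀`. -/

namespace VermaRelation

open Matrix

theorem transvection_braid {n R : Type*} [Fintype n] [DecidableEq n] [CommRing R] {i j k : n}
    (hij : i ≠ j) (hjk : j ≠ k) (hik : i ≠ k) {a₁ a₂ a₃ b₁ b₂ b₃ : R}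
    (ha : a₃ + a₁ = a₂) (hb : b₃ + b₁ = b₂) (hab : b₃ * a₃ = b₁ * a₁) :
    transvection i j b₃ * transvection j k a₂ * transvection i j b₁ =
      transvection j k a₃ * transvection i j b₂ * transvection j k a₁ := by
  simp only [transvection, mul_add, add_mul, one_mul, mul_one, single_mul_single_same,
    single_mul_single_of_ne _ _ _ _ hij.symm, single_mul_single_of_ne _ _ _ _ hjk.symm,
    single_mul_single_of_ne _ _ _ _ hik.symm, hab, ← ha, ← hb, single_add, add_zero]
  abel

theorem forall_fin_six {P : Fin 6 → Prop} :
    (∀ i, P i) ↔ P 0 ∧ P 1 ∧ P 2 ∧ P 3 ∧ P 4 ∧ P 5 := by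
  simp only [Fin.forall_fin_succ, Fin.forall_fin_zero, and_true]
  rfl

noncomputable section

/-- The quantity `β`, common to `x` and `e₁ᶜ x`, in terms of which the first two rows of
`crystalMatrix x` are written. -/
def beta (x : Fin 6 → ℝ) : ℝ := (x 3 + x 2 * x 4) / x 2 ^ 2 + x 2 / x 1

/-- The quantity `κ`, common to `x` and `e₁ᶜ x`; the only nonzero entry of the last row of
`crystalMatrix x` is `β + κ`. -/
def kappa (x : Fin 6 → ℝ) : ℝ := x 5 / x 4 + x 4 * (x 3 + x 2 * x 4) / (x 2 * x 3)

/-- The matrix encoding a point `x`: on positive points `x ↦ crystalMatrix x` is injective and turns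
`e₀ᶜ` and `e₁ᶜ` into left multiplication by transvections in the index pairs `(0, 1)` and
`(1, 2)`. -/
def crystalMatrix (x : Fin 6 → ℝ) : Matrix (Fin 3) (Fin 3) ℝ :=
  !![x 0 / x 4, x 0 / x 4 * beta x,
      x 0 / x 4 * beta x ^ 2 + x 0 / x 2 * (beta x + kappa x);
    1 / x 4 - x 2 / x 0 + x 1 / x 0 * (beta x + kappa x), beta x / x 4 + x 2 / x 0 * kappa x,
      beta x ^ 2 / x 4 + x 2 / x 0 * beta x * kappa x + (1 / x 2 - x 4 / x 0) * (beta x + kappa x);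
    beta x + kappa x, 0, 0]

/-- A weight function, multiplied by `c` under `e₀ᶜ` and fixed by `e₁ᶜ`. -/
def wt0 (x : Fin 6 → ℝ) : ℝ := x 0 / (x 2 * x 4)

/-- A weight function, multiplied by `c` under `e₁ᶜ` and fixed by `e₀ᶜ`. -/
def wt1 (x : Fin 6 → ℝ) : ℝ := x 1 * x 3 * x 5 / (x 2 * x 4) ^ 2

/-- The polynomial `D` in the definition of `e₀ᶜ`, in factored form; `E` is its value at `c = 1`. -/
def polyD (c : ℝ) (x : Fin 6 → ℝ) : ℝ :=
  x 2 ^ 3 * x 3 * (c * x 0 + x 3) * (c * x 0 + x 1 * x 5) + c * x 0 * x 1 * (x 3 + x 2 * x 4) ^ 3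

/-- The polynomial `F` in the definition of `e₀ᶜ`, in factored form. -/
def polyF (c : ℝ) (x : Fin 6 → ℝ) : ℝ :=
  x 2 ^ 3 * x 3 * (c * x 0 + x 3) * (x 0 + x 1 * x 5) + c * x 0 * x 1 * (x 3 + x 2 * x 4) ^ 3

/-- The polynomial `G` in the definition of `e₀ᶜ`, in factored form. -/
def polyG (c : ℝ) (x : Fin 6 → ℝ) : ℝ :=
  x 2 ^ 3 * x 3 * (c * x 0 + x 3) * (x 0 + x 1 * x 5) +
    x 0 * x 1 * (x 3 + x 2 * x 4) ^ 2 * (x 3 + c * x 2 * x 4)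

/-- The polynomial `H` in the definition of `e₀ᶜ`, in factored form. -/
def polyH (c : ℝ) (x : Fin 6 → ℝ) : ℝ :=
  x 2 ^ 3 * x 3 * (c * x 0 + x 3) * (x 0 + x 1 * x 5) + x 0 * x 1 * (x 3 + x 2 * x 4) ^ 3

/-- The function `ε₀` of the geometric crystal, divided by `c` under `e₀ᶜ`. -/
def eps0 (x : Fin 6 → ℝ) : ℝ := polyD 1 x / (x 0 ^ 3 * x 2 ^ 3 * x 3)

/-- The function `ε₁` of the geometric crystal (called `A1` in the definition of `e₁ᶜ`), divided
by `c` under `e₁ᶜ`. -/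
def eps1 (x : Fin 6 → ℝ) : ℝ :=
  x 0 / x 1 + x 0 * x 2 ^ 3 / (x 1 ^ 2 * x 3) + x 0 * x 2 ^ 3 * x 4 ^ 3 / (x 1 ^ 2 * x 3 ^ 2 * x 5)

/-- The summand of `eps0 x * eps1 x` that is divided by `c` under `e₀ᶜ` and fixed by `e₁ᶜ`. -/
def rho0 (x : Fin 6 → ℝ) : ℝ := crystalMatrix x 1 2 / wt0 x

/-- The summand of `eps0 x * eps1 x` that is divided by `c` under `e₁ᶜ` and fixed by `e₀ᶜ`. -/
def rho1 (x : Fin 6 → ℝ) : ℝ :=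
  (crystalMatrix x 1 1 * crystalMatrix x 2 0 - crystalMatrix x 1 2) / wt1 x

variable {c d : ℝ} {x : Fin 6 → ℝ}

/-! ### Relations between the matrix entries -/

theorem crystalMatrix_two_one : crystalMatrix x 2 1 = 0 := rfl

theorem crystalMatrix_two_two : crystalMatrix x 2 2 = 0 := rfl

theorem crystalMatrix_two_zero_sq (hx : ∀ i, x i ≠ 0) :
    crystalMatrix x 2 0 ^ 2 =
      crystalMatrix x 0 2 * crystalMatrix x 1 1 - crystalMatrix x 0 1 * crystalMatrix x 1 2 := by
  simp only [crystalMatrix, of_apply, cons_val', cons_val_zero, cons_val_fin_one, cons_val,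
    cons_val_one]
  field_simp [hx]
  ring

theorem wt0_sub_one_mul (hx : ∀ i, x i ≠ 0) :
    (wt0 x - 1) * crystalMatrix x 2 0 =
      crystalMatrix x 0 0 * crystalMatrix x 1 2 - crystalMatrix x 0 1 * crystalMatrix x 1 1 := by
  simp only [crystalMatrix, of_apply, cons_val', cons_val_zero, cons_val_fin_one, cons_val,
    cons_val_one, wt0]
  field_simp [hx]
  ring

theorem wt0_mul_eps0_mul (hx : ∀ i, x i ≠ 0) :
    wt0 x * eps0 x * crystalMatrix x 2 0 =
      crystalMatrix x 1 0 * crystalMatrix x 1 2 - crystalMatrix x 1 1 ^ 2 := by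
  simp only [crystalMatrix, of_apply, cons_val', cons_val_zero, cons_val_fin_one, cons_val,
    cons_val_one, wt0, eps0, polyD, beta, kappa]
  field_simp [hx]
  ring

theorem wt1_mul_eps1 (hx : ∀ i, x i ≠ 0) :
    wt1 x * eps1 x = crystalMatrix x 0 1 * crystalMatrix x 2 0 - crystalMatrix x 0 2 := by
  simp only [crystalMatrix, of_apply, cons_val', cons_val_zero, cons_val_fin_one, cons_val,
    cons_val_one, wt1, eps1, beta, kappa]
  field_simp [hx]
  ring

theorem wt1_sub_one_mul (hx : ∀ i, x i ≠ 0) :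
    (wt1 x - 1) * crystalMatrix x 2 0 =
      crystalMatrix x 1 0 * (crystalMatrix x 0 1 * crystalMatrix x 2 0 - crystalMatrix x 0 2) -
      crystalMatrix x 0 0 * (crystalMatrix x 1 1 * crystalMatrix x 2 0 - crystalMatrix x 1 2) := by
  simp only [crystalMatrix, of_apply, cons_val', cons_val_zero, cons_val_fin_one, cons_val,
    cons_val_one, wt1, beta, kappa]
  field_simp [hx]
  ring

theorem wt0_ne_zero (hx : ∀ i, x i ≠ 0) : wt0 x ≠ 0 := by
  simp [wt0, hx]

theorem wt1_ne_zero (hx : ∀ i, x i ≠ 0) : wt1 x ≠ 0 := by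
  simp [wt1, hx]

theorem beta_pos (hx : ∀ i, 0 < x i) : 0 < beta x := by
  unfold beta
  positivity [hx 1, hx 2, hx 3, hx 4]

theorem kappa_pos (hx : ∀ i, 0 < x i) : 0 < kappa x := by
  unfold kappa
  positivity [hx 2, hx 3, hx 4, hx 5]

theorem crystalMatrix_zero_zero_pos (hx : ∀ i, 0 < x i) : 0 < crystalMatrix x 0 0 :=
  div_pos (hx 0) (hx 4)

theorem crystalMatrix_one_one_pos (hx : ∀ i, 0 < x i) : 0 < crystalMatrix x 1 1 :=
  add_pos (div_pos (beta_pos hx) (hx 4)) (mul_pos (div_pos (hx 2) (hx 0)) (kappa_pos hx))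

theorem crystalMatrix_two_zero_pos (hx : ∀ i, 0 < x i) : 0 < crystalMatrix x 2 0 :=
  add_pos (beta_pos hx) (kappa_pos hx)

theorem eps0_mul_eps1 (hx : ∀ i, 0 < x i) :
    eps0 x * eps1 x = rho0 x + rho1 x := by
  have hx₀ i := (hx i).ne'
  have h0 := wt0_ne_zero hx₀
  have h1 := wt1_ne_zero hx₀
  simp only [rho0, rho1]
  field_simp
  refine mul_right_cancel₀ (crystalMatrix_two_zero_pos hx).ne' ?_
  linear_combination wt1 x * eps1 x * wt0_mul_eps0_mul hx₀ +
    (crystalMatrix x 1 0 * crystalMatrix x 1 2 - crystalMatrix x 1 1 ^ 2) * wt1_mul_eps1 hx₀ -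
    (crystalMatrix x 1 1 * crystalMatrix x 2 0 - crystalMatrix x 1 2) * wt0_sub_one_mul hx₀ -
    crystalMatrix x 1 2 * wt1_sub_one_mul hx₀ - crystalMatrix x 1 1 * crystalMatrix_two_zero_sq hx₀

theorem eq_of_ratios_eq_of_wt0_eq {y : Fin 6 → ℝ} (hx : ∀ i, x i ≠ 0) (hy : ∀ i, y i ≠ 0)
    (h02 : x 0 / x 2 = y 0 / y 2) (h04 : x 0 / x 4 = y 0 / y 4) (hwt : wt0 x = wt0 y) :
    x 0 = y 0 ∧ x 2 = y 2 ∧ x 4 = y 4 := by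
  have eq_div {z : Fin 6 → ℝ} (hz : ∀ i, z i ≠ 0) : z 0 = z 0 / z 4 * (z 0 / z 2) / wt0 z := by
    unfold wt0
    field_simp [hz]
  have h0 : x 0 = y 0 := by rw [eq_div hx, h04, h02, hwt, ← eq_div hy]
  rw [h0] at h02 h04
  exact ⟨h0, inv_injective (mul_left_cancel₀ (hy 0) h02),
    inv_injective (mul_left_cancel₀ (hy 0) h04)⟩

theorem crystalMatrix_injOn : Set.InjOn crystalMatrix {x | ∀ i, 0 < x i} := by
  intro x hx y hy hxy
  obtain ⟨y0, _, y2, _, y4, _⟩ := forall_fin_six.1 hy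
  have entry i j : crystalMatrix x i j = crystalMatrix y i j := by rw [hxy]
  have h04 : x 0 / x 4 = y 0 / y 4 := entry 0 0
  have hβ : beta x = beta y := by
    have h : x 0 / x 4 * beta x = y 0 / y 4 * beta y := entry 0 1
    rw [h04] at h
    exact mul_left_cancel₀ (div_pos y0 y4).ne' h
  have hκ : kappa x = kappa y := by
    have h : beta x + kappa x = beta y + kappa y := entry 2 0
    rwa [hβ, add_right_inj] at h
  have hr : 0 < beta y + kappa y := crystalMatrix_two_zero_pos hy
  have h02 : x 0 / x 2 = y 0 / y 2 := by
    have h : x 0 / x 4 * beta x ^ 2 + x 0 / x 2 * (beta x + kappa x) =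
      y 0 / y 4 * beta y ^ 2 + y 0 / y 2 * (beta y + kappa y) := entry 0 2
    rw [h04, hβ, hκ, add_right_inj] at h
    exact mul_right_cancel₀ hr.ne' h
  have hwt : wt0 x = wt0 y := by
    have h := wt0_sub_one_mul fun i => (hx i).ne'
    rw [hxy, ← wt0_sub_one_mul fun i => (hy i).ne'] at h
    exact sub_left_injective (mul_right_cancel₀ hr.ne' h)
  obtain ⟨h0, h2, h4⟩ := eq_of_ratios_eq_of_wt0_eq (fun i => (hx i).ne')
    (fun i => (hy i).ne') h02 h04 hwt
  have h1 : x 1 = y 1 := by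
    have h : 1 / x 4 - x 2 / x 0 + x 1 / x 0 * (beta x + kappa x) =
      1 / y 4 - y 2 / y 0 + y 1 / y 0 * (beta y + kappa y) := entry 1 0
    rw [h0, h2, h4, hβ, hκ, add_right_inj] at h
    exact (div_left_inj' y0.ne').1 (mul_right_cancel₀ hr.ne' h)
  have h3 : x 3 = y 3 := by
    rw [beta, beta, h1, h2, h4, add_left_inj, div_left_inj' (by positivity), add_left_inj] at hβ
    exact hβ
  have h5 : x 5 = y 5 := by
    rw [kappa, kappa, h2, h3, h4, add_left_inj, div_left_inj' y4.ne'] at hκ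
    exact hκ
  exact funext (forall_fin_six.2 ⟨h0, h1, h2, h3, h4, h5⟩)

theorem polyD_pos (hc : 0 < c) (hx : ∀ i, 0 < x i) : 0 < polyD c x := by
  unfold polyD
  positivity [hx 0, hx 1, hx 2, hx 3, hx 4, hx 5]

theorem polyF_pos (hc : 0 < c) (hx : ∀ i, 0 < x i) : 0 < polyF c x := by
  unfold polyF
  positivity [hx 0, hx 1, hx 2, hx 3, hx 4, hx 5]

theorem polyG_pos (hc : 0 < c) (hx : ∀ i, 0 < x i) : 0 < polyG c x := by
  unfold polyG
  positivity [hx 0, hx 1, hx 2, hx 3, hx 4, hx 5]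

theorem polyH_pos (hc : 0 < c) (hx : ∀ i, 0 < x i) : 0 < polyH c x := by
  unfold polyH
  positivity [hx 0, hx 1, hx 2, hx 3, hx 4, hx 5]

theorem eps0_pos (hx : ∀ i, 0 < x i) : 0 < eps0 x := by
  unfold eps0
  positivity [hx 0, hx 2, hx 3, polyD_pos one_pos hx]

theorem eps1_pos (hx : ∀ i, 0 < x i) : 0 < eps1 x := by
  unfold eps1
  positivity [hx 0, hx 1, hx 2, hx 3, hx 4, hx 5]

/-! ### The action of `e₁ᶜ` -/

theorem e1act_pos (hc : 0 < c) (hx : ∀ i, 0 < x i) (i : Fin 6) : 0 < e1act c x i := by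
  obtain ⟨x0, x1, x2, x3, x4, x5⟩ := forall_fin_six.1 hx
  revert i
  refine forall_fin_six.2 ⟨?_, ?_, ?_, ?_, ?_, ?_⟩ <;> simp only [e1act, cons_val] <;> positivity

theorem e1act_one (hx : ∀ i, 0 < x i) : e1act c x 1 = x 1 + (c - 1) / eps1 x * x 0 := by
  obtain ⟨x0, x1, x2, x3, x4, x5⟩ := forall_fin_six.1 hx
  simp only [e1act, eps1, cons_val]
  field_simp
  ring

theorem beta_e1act (hc : 0 < c) (hx : ∀ i, 0 < x i) : beta (e1act c x) = beta x := by
  obtain ⟨x0, x1, x2, x3, x4, x5⟩ := forall_fin_six.1 hx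
  simp only [beta, e1act, cons_val]
  field_simp
  ring

theorem kappa_e1act (hc : 0 < c) (hx : ∀ i, 0 < x i) : kappa (e1act c x) = kappa x := by
  obtain ⟨x0, x1, x2, x3, x4, x5⟩ := forall_fin_six.1 hx
  simp only [kappa, e1act, cons_val]
  field_simp
  ring

theorem wt0_e1act : wt0 (e1act c x) = wt0 x := rfl

theorem wt1_e1act (hc : 0 < c) (hx : ∀ i, 0 < x i) : wt1 (e1act c x) = c * wt1 x := by
  obtain ⟨x0, x1, x2, x3, x4, x5⟩ := forall_fin_six.1 hx
  simp only [wt1, e1act, cons_val]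
  field_simp

theorem crystalMatrix_e1act (hc : 0 < c) (hx : ∀ i, 0 < x i) :
    crystalMatrix (e1act c x) = transvection 1 2 ((c - 1) / eps1 x) * crystalMatrix x := by
  have h0 : e1act c x 0 = x 0 := rfl
  have h2 : e1act c x 2 = x 2 := rfl
  have h4 : e1act c x 4 = x 4 := rfl
  have x0 := (hx 0).ne'
  simp only [crystalMatrix, beta_e1act hc hx, kappa_e1act hc hx, e1act_one hx, h0, h2, h4]
  ext i j
  fin_cases i <;> fin_cases j <;> simp [add_div, add_mul, add_assoc, x0]

/-! ### The action of `e₀ᶜ` -/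

theorem e0act_eq (c : ℝ) (x : Fin 6 → ℝ) : e0act c x =
    ![polyD c x / (c * polyD 1 x) * x 0, polyF c x / (c * polyD 1 x) * x 1,
      polyG c x / (c * polyD 1 x) * x 2,
      polyD c x * polyH c x / (c ^ 2 * polyD 1 x * polyF c x) * x 3,
      polyD c x / (c * polyG c x) * x 4, polyD c x / (c * polyH c x) * x 5] := by
  unfold e0act polyD polyF polyG polyH
  ring_nf

theorem e0act_pos (hc : 0 < c) (hx : ∀ i, 0 < x i) (i : Fin 6) : 0 < e0act c x i := by
  obtain ⟨x0, x1, x2, x3, x4, x5⟩ := forall_fin_six.1 hx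
  have hD := polyD_pos hc hx
  have hE := polyD_pos one_pos hx
  have hF := polyF_pos hc hx
  have hG := polyG_pos hc hx
  have hH := polyH_pos hc hx
  rw [e0act_eq]
  revert i
  refine forall_fin_six.2 ⟨?_, ?_, ?_, ?_, ?_, ?_⟩ <;> simp only [cons_val] <;> positivity

theorem wt0_e0act (hc : 0 < c) (hx : ∀ i, 0 < x i) : wt0 (e0act c x) = c * wt0 x := by
  obtain ⟨x0, _, x2, _, x4, _⟩ := forall_fin_six.1 hx
  have hD := polyD_pos hc hx
  have hE := polyD_pos one_pos hx
  have hG := polyG_pos hc hx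
  simp only [wt0, e0act_eq, cons_val]
  field_simp

theorem wt1_e0act (hc : 0 < c) (hx : ∀ i, 0 < x i) : wt1 (e0act c x) = wt1 x := by
  obtain ⟨_, x1, x2, x3, x4, x5⟩ := forall_fin_six.1 hx
  have hD := polyD_pos hc hx
  have hE := polyD_pos one_pos hx
  have hF := polyF_pos hc hx
  have hG := polyG_pos hc hx
  have hH := polyH_pos hc hx
  simp only [wt1, e0act_eq, cons_val]
  field_simp

theorem polyH_mul_add_polyF_mul (c : ℝ) (x : Fin 6 → ℝ) :
    polyH c x * x 3 + polyF c x * (x 2 * x 4) = polyG c x * (x 3 + x 2 * x 4) := by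
  unfold polyH polyF polyG
  ring

theorem e0act_three_add (hc : 0 < c) (hx : ∀ i, 0 < x i) :
    e0act c x 3 + e0act c x 2 * e0act c x 4 =
      polyD c x * polyG c x / (c ^ 2 * polyD 1 x * polyF c x) * (x 3 + x 2 * x 4) := by
  have hE := polyD_pos one_pos hx
  have hF := polyF_pos hc hx
  have hG := polyG_pos hc hx
  simp only [e0act_eq, cons_val]
  field_simp
  linear_combination polyD c x * polyH_mul_add_polyF_mul c x

theorem polyF_mul_polyG_mul_beta_e0act (hc : 0 < c) (hx : ∀ i, 0 < x i) :
    polyF c x * polyG c x * beta (e0act c x) =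
      polyD c x * polyD 1 x * ((x 3 + x 2 * x 4) / x 2 ^ 2) + polyG c x ^ 2 * (x 2 / x 1) := by
  obtain ⟨_, x1, x2, x3, x4, _⟩ := forall_fin_six.1 hx
  have hD := polyD_pos hc hx
  have hE := polyD_pos one_pos hx
  have hF := polyF_pos hc hx
  have hG := polyG_pos hc hx
  rw [beta, e0act_three_add hc hx]
  simp only [e0act_eq, cons_val]
  field_simp

theorem polyG_mul_polyH_mul_kappa_e0act (hc : 0 < c) (hx : ∀ i, 0 < x i) :
    polyG c x * polyH c x * kappa (e0act c x) =
      polyD c x * polyD 1 x * (x 4 * (x 3 + x 2 * x 4) / (x 2 * x 3)) +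
        polyG c x ^ 2 * (x 5 / x 4) := by
  obtain ⟨_, _, x2, x3, x4, _⟩ := forall_fin_six.1 hx
  have hD := polyD_pos hc hx
  have hF := polyF_pos hc hx
  have hG := polyG_pos hc hx
  have hH := polyH_pos hc hx
  rw [kappa, e0act_three_add hc hx]
  simp only [e0act_eq, cons_val]
  field_simp
  ring

theorem polyG_mul_crystalMatrix_zero_zero (hx : ∀ i, 0 < x i) :
    polyG c x * crystalMatrix x 0 0 =
      polyD 1 x * (crystalMatrix x 0 0 + (c - 1) / eps0 x * crystalMatrix x 1 0) := by
  obtain ⟨x0, x1, x2, x3, x4, _⟩ := forall_fin_six.1 hx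
  have hE := polyD_pos one_pos hx
  simp only [crystalMatrix, of_apply, cons_val', cons_val_zero, cons_val_fin_one, cons_val_one,
    beta, kappa, polyG, eps0]
  field_simp
  unfold polyD
  ring

theorem polyG_mul_crystalMatrix_zero_zero_mul_beta_e0act (hc : 0 < c) (hx : ∀ i, 0 < x i) :
    polyG c x * crystalMatrix x 0 0 * beta (e0act c x) =
      polyD 1 x * (crystalMatrix x 0 1 + (c - 1) / eps0 x * crystalMatrix x 1 1) := by
  obtain ⟨x0, x1, x2, x3, x4, _⟩ := forall_fin_six.1 hx
  have hE := polyD_pos one_pos hx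
  refine mul_left_cancel₀ (polyF_pos hc hx).ne' ?_
  suffices h : (polyD c x * polyD 1 x * ((x 3 + x 2 * x 4) / x 2 ^ 2) +
      polyG c x ^ 2 * (x 2 / x 1)) * crystalMatrix x 0 0 =
      polyF c x *
        (polyD 1 x * (crystalMatrix x 0 1 + (c - 1) / eps0 x * crystalMatrix x 1 1)) by
    linear_combination h + crystalMatrix x 0 0 * polyF_mul_polyG_mul_beta_e0act hc hx
  simp only [crystalMatrix, of_apply, cons_val', cons_val_zero, cons_val_fin_one, cons_val_one,
    beta, kappa, polyF, polyG, eps0]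
  field_simp
  unfold polyD
  ring

theorem polyG_mul_crystalMatrix_zero_zero_mul_kappa_e0act (hc : 0 < c) (hx : ∀ i, 0 < x i) :
    polyG c x * crystalMatrix x 0 0 * kappa (e0act c x) =
      polyD 1 x * (crystalMatrix x 0 0 * kappa x + (c - 1) / eps0 x *
        (crystalMatrix x 1 0 * crystalMatrix x 2 0 - crystalMatrix x 1 1)) := by
  obtain ⟨x0, x1, x2, x3, x4, _⟩ := forall_fin_six.1 hx
  have hE := polyD_pos one_pos hx
  refine mul_left_cancel₀ (polyH_pos hc hx).ne' ?_
  suffices h : (polyD c x * polyD 1 x * (x 4 * (x 3 + x 2 * x 4) / (x 2 * x 3)) +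
      polyG c x ^ 2 * (x 5 / x 4)) * crystalMatrix x 0 0 =
      polyH c x * (polyD 1 x * (crystalMatrix x 0 0 * kappa x + (c - 1) / eps0 x *
        (crystalMatrix x 1 0 * crystalMatrix x 2 0 - crystalMatrix x 1 1))) by
    linear_combination h + crystalMatrix x 0 0 * polyG_mul_polyH_mul_kappa_e0act hc hx
  simp only [crystalMatrix, of_apply, cons_val', cons_val_zero, cons_val_fin_one, cons_val_one,
    cons_val, beta, kappa, polyG, polyH, eps0]
  field_simp
  unfold polyD
  ring

theorem polyD_mul_crystalMatrix_one_one (hx : ∀ i, 0 < x i) :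
    polyD c x * crystalMatrix x 1 1 * crystalMatrix x 0 0 =
      polyD 1 x * (c * (crystalMatrix x 0 1 + (c - 1) / eps0 x * crystalMatrix x 1 1) / x 4 +
        x 2 / x 0 * (crystalMatrix x 0 0 * kappa x + (c - 1) / eps0 x *
          (crystalMatrix x 1 0 * crystalMatrix x 2 0 - crystalMatrix x 1 1))) := by
  obtain ⟨x0, x1, x2, x3, x4, _⟩ := forall_fin_six.1 hx
  have hE := polyD_pos one_pos hx
  simp only [crystalMatrix, of_apply, cons_val', cons_val_zero, cons_val_fin_one, cons_val_one,
    cons_val, beta, kappa, eps0]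
  field_simp
  unfold polyD
  ring

theorem crystalMatrix_e0act_zero_zero (hc : 0 < c) (hx : ∀ i, 0 < x i) :
    crystalMatrix (e0act c x) 0 0 =
      crystalMatrix x 0 0 + (c - 1) / eps0 x * crystalMatrix x 1 0 := by
  have hD := polyD_pos hc hx
  have hE := polyD_pos one_pos hx
  have hG := polyG_pos hc hx
  have x4 := hx 4
  refine mul_left_cancel₀ hE.ne' (.trans ?_ (polyG_mul_crystalMatrix_zero_zero hx))
  simp only [crystalMatrix, e0act_eq, of_apply, cons_val', cons_val_zero, cons_val_fin_one,
    cons_val]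
  field_simp

theorem crystalMatrix_e0act_zero_one (hc : 0 < c) (hx : ∀ i, 0 < x i) :
    crystalMatrix (e0act c x) 0 1 =
      crystalMatrix x 0 1 + (c - 1) / eps0 x * crystalMatrix x 1 1 := by
  refine mul_left_cancel₀ (polyD_pos one_pos hx).ne' ?_
  rw [← polyG_mul_crystalMatrix_zero_zero_mul_beta_e0act hc hx,
    polyG_mul_crystalMatrix_zero_zero hx, ← crystalMatrix_e0act_zero_zero hc hx, mul_assoc]
  rfl

theorem crystalMatrix_e0act_two_zero (hc : 0 < c) (hx : ∀ i, 0 < x i) :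
    crystalMatrix (e0act c x) 2 0 = crystalMatrix x 2 0 := by
  have hG := mul_pos (polyG_pos hc hx) (crystalMatrix_zero_zero_pos hx)
  refine mul_left_cancel₀ hG.ne' ?_
  have h01 : crystalMatrix x 0 1 = crystalMatrix x 0 0 * beta x := rfl
  have h20 : crystalMatrix x 2 0 = beta x + kappa x := rfl
  have h20' : crystalMatrix (e0act c x) 2 0 = beta (e0act c x) + kappa (e0act c x) := rfl
  rw [h20', mul_add, polyG_mul_crystalMatrix_zero_zero_mul_beta_e0act hc hx,
    polyG_mul_crystalMatrix_zero_zero_mul_kappa_e0act hc hx, polyG_mul_crystalMatrix_zero_zero hx,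
    h01, h20]
  ring

theorem crystalMatrix_e0act_one_one (hc : 0 < c) (hx : ∀ i, 0 < x i) :
    crystalMatrix (e0act c x) 1 1 = crystalMatrix x 1 1 := by
  have hD := polyD_pos hc hx
  have hE := polyD_pos one_pos hx
  have hG := polyG_pos hc hx
  have x0 := hx 0
  have x4 := hx 4
  have h : polyD c x * crystalMatrix (e0act c x) 1 1 =
      c * (polyG c x * beta (e0act c x)) / x 4 +
        x 2 / x 0 * (polyG c x * kappa (e0act c x)) := by
    simp only [crystalMatrix, e0act_eq, of_apply, cons_val', cons_val_zero, cons_val_fin_one,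
      cons_val, cons_val_one]
    field_simp
  refine mul_left_cancel₀ hD.ne' (mul_right_cancel₀ (crystalMatrix_zero_zero_pos hx).ne' ?_)
  rw [h, polyD_mul_crystalMatrix_one_one hx]
  linear_combination c / x 4 * polyG_mul_crystalMatrix_zero_zero_mul_beta_e0act hc hx +
    x 2 / x 0 * polyG_mul_crystalMatrix_zero_zero_mul_kappa_e0act hc hx

-- The remaining entries are not computed from `e₀ᶜ`: the relations satisfied by the entries of
-- every `crystalMatrix` determine them one after the other.
theorem crystalMatrix_e0act_one_two (hc : 0 < c) (hx : ∀ i, 0 < x i) :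
    crystalMatrix (e0act c x) 1 2 = crystalMatrix x 1 2 := by
  have hb : (c - 1) / eps0 x * eps0 x = c - 1 := div_mul_cancel₀ _ (eps0_pos hx).ne'
  have hx₀ i := (hx i).ne'
  have h := wt0_sub_one_mul fun i => (e0act_pos hc hx i).ne'
  have h00 := crystalMatrix_zero_zero_pos (e0act_pos hc hx)
  refine mul_left_cancel₀ h00.ne' ?_
  rw [wt0_e0act hc hx, crystalMatrix_e0act_two_zero hc hx, crystalMatrix_e0act_one_one hc hx,
    crystalMatrix_e0act_zero_one hc hx] at h
  have h0 := crystalMatrix_e0act_zero_zero hc hx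
  linear_combination -h + wt0_sub_one_mul hx₀ + (c - 1) / eps0 x * wt0_mul_eps0_mul hx₀ -
    wt0 x * crystalMatrix x 2 0 * hb - crystalMatrix x 1 2 * h0

theorem crystalMatrix_e0act_zero_two (hc : 0 < c) (hx : ∀ i, 0 < x i) :
    crystalMatrix (e0act c x) 0 2 =
      crystalMatrix x 0 2 + (c - 1) / eps0 x * crystalMatrix x 1 2 := by
  have h := crystalMatrix_two_zero_sq fun i => (e0act_pos hc hx i).ne'
  rw [crystalMatrix_e0act_two_zero hc hx, crystalMatrix_e0act_one_one hc hx,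
    crystalMatrix_e0act_zero_one hc hx, crystalMatrix_e0act_one_two hc hx] at h
  refine mul_right_cancel₀ (crystalMatrix_one_one_pos hx).ne' ?_
  linear_combination crystalMatrix_two_zero_sq (fun i => (hx i).ne') - h

theorem crystalMatrix_e0act_one_zero (hc : 0 < c) (hx : ∀ i, 0 < x i) :
    crystalMatrix (e0act c x) 1 0 = crystalMatrix x 1 0 := by
  have hx₀' i := (e0act_pos hc hx i).ne'
  have hne := mul_ne_zero (wt1_ne_zero hx₀') (eps1_pos (e0act_pos hc hx)).ne'
  have h := wt1_sub_one_mul hx₀'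
  rw [wt1_mul_eps1 hx₀'] at hne
  refine mul_right_cancel₀ hne ?_
  rw [wt1_e0act hc hx, crystalMatrix_e0act_zero_zero hc hx, crystalMatrix_e0act_one_one hc hx,
    crystalMatrix_e0act_one_two hc hx] at h
  rw [crystalMatrix_e0act_two_zero hc hx, crystalMatrix_e0act_zero_one hc hx,
    crystalMatrix_e0act_zero_two hc hx] at h ⊢
  linear_combination wt1_sub_one_mul (fun i => (hx i).ne') - h

theorem crystalMatrix_e0act (hc : 0 < c) (hx : ∀ i, 0 < x i) :
    crystalMatrix (e0act c x) = transvection 0 1 ((c - 1) / eps0 x) * crystalMatrix x := by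
  ext i j
  fin_cases i
  · fin_cases j
    · simp [crystalMatrix_e0act_zero_zero hc hx]
    · simp [crystalMatrix_e0act_zero_one hc hx]
    · simp [crystalMatrix_e0act_zero_two hc hx]
  · fin_cases j
    · simp [crystalMatrix_e0act_one_zero hc hx]
    · simp [crystalMatrix_e0act_one_one hc hx]
    · simp [crystalMatrix_e0act_one_two hc hx]
  · fin_cases j
    · simp [crystalMatrix_e0act_two_zero hc hx]
    · simp [crystalMatrix_two_one]
    · simp [crystalMatrix_two_two]

/-! ### The transvection parameters -/

theorem eps0_e0act (hc : 0 < c) (hx : ∀ i, 0 < x i) : eps0 (e0act c x) = eps0 x / c := by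
  have hx₀ i := (hx i).ne'
  have h := wt0_mul_eps0_mul fun i => (e0act_pos hc hx i).ne'
  have hne := mul_ne_zero (wt0_ne_zero hx₀) (crystalMatrix_two_zero_pos hx).ne'
  rw [wt0_e0act hc hx, crystalMatrix_e0act_two_zero hc hx, crystalMatrix_e0act_one_zero hc hx,
    crystalMatrix_e0act_one_one hc hx, crystalMatrix_e0act_one_two hc hx] at h
  refine (eq_div_iff hc.ne').2 (mul_left_cancel₀ hne ?_)
  linear_combination h - wt0_mul_eps0_mul hx₀

theorem eps1_e1act (hc : 0 < c) (hx : ∀ i, 0 < x i) : eps1 (e1act c x) = eps1 x / c := by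
  obtain ⟨x0, x1, x2, x3, x4, x5⟩ := forall_fin_six.1 hx
  simp only [eps1, e1act, cons_val]
  field_simp
  ring

theorem rho0_e0act (hc : 0 < c) (hx : ∀ i, 0 < x i) : rho0 (e0act c x) = rho0 x / c := by
  rw [rho0, crystalMatrix_e0act_one_two hc hx, wt0_e0act hc hx, mul_comm, ← div_div, rho0]

theorem rho1_e0act (hc : 0 < c) (hx : ∀ i, 0 < x i) : rho1 (e0act c x) = rho1 x := by
  rw [rho1, crystalMatrix_e0act_one_one hc hx, crystalMatrix_e0act_two_zero hc hx,
    crystalMatrix_e0act_one_two hc hx, wt1_e0act hc hx, rho1]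

theorem rho0_e1act (hc : 0 < c) (hx : ∀ i, 0 < x i) : rho0 (e1act c x) = rho0 x := by
  rw [rho0, wt0_e1act, crystalMatrix_e1act hc hx, transvection_mul_apply_same,
    crystalMatrix_two_two, mul_zero, add_zero, rho0]

theorem rho1_e1act (hc : 0 < c) (hx : ∀ i, 0 < x i) : rho1 (e1act c x) = rho1 x / c := by
  rw [rho1, wt1_e1act hc hx, crystalMatrix_e1act hc hx, transvection_mul_apply_same,
    transvection_mul_apply_same, transvection_mul_apply_of_ne _ _ _ _ (by decide),
    crystalMatrix_two_one, crystalMatrix_two_two, mul_zero, add_zero, add_zero, mul_comm c,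
    ← div_div, rho1]

theorem eps0_e1act (hc : 0 < c) (hx : ∀ i, 0 < x i) :
    eps0 (e1act c x) = (c * rho0 x + rho1 x) / eps1 x := by
  have h := eps0_mul_eps1 (e1act_pos hc hx)
  rw [eps1_e1act hc hx, rho0_e1act hc hx, rho1_e1act hc hx] at h
  rw [eq_div_iff (eps1_pos hx).ne']
  field_simp at h
  exact h

theorem eps1_e0act (hc : 0 < c) (hx : ∀ i, 0 < x i) :
    eps1 (e0act c x) = (rho0 x + c * rho1 x) / eps0 x := by
  have h := eps0_mul_eps1 (e0act_pos hc hx)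
  rw [eps0_e0act hc hx, rho0_e0act hc hx, rho1_e0act hc hx] at h
  rw [eq_div_iff (eps0_pos hx).ne']
  field_simp at h
  rwa [mul_comm]

theorem eps0_e1act_e0act (hc : 0 < c) (hd : 0 < d) (hx : ∀ i, 0 < x i) :
    eps0 (e1act (c * d) (e0act d x)) =
      eps0 x * (c * rho0 x + rho1 x) / (rho0 x + d * rho1 x) := by
  rw [eps0_e1act (mul_pos hc hd) (e0act_pos hd hx), rho0_e0act hd hx, rho1_e0act hd hx,
    eps1_e0act hd hx]
  field_simp

theorem eps1_e0act_e1act (hc : 0 < c) (hd : 0 < d) (hx : ∀ i, 0 < x i) :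
    eps1 (e0act (c * d) (e1act c x)) =
      eps1 x * (rho0 x + d * rho1 x) / (c * rho0 x + rho1 x) := by
  rw [eps1_e0act (mul_pos hc hd) (e1act_pos hc hx), rho0_e1act hc hx, rho1_e1act hc hx,
    eps0_e1act hc hx]
  field_simp

theorem mul_rho0_add_rho1_pos (hc : 0 < c) (hx : ∀ i, 0 < x i) : 0 < c * rho0 x + rho1 x := by
  have h := eps0_pos (e1act_pos hc hx)
  rwa [eps0_e1act hc hx, div_pos_iff_of_pos_right (eps1_pos hx)] at h

theorem rho0_add_mul_rho1_pos (hc : 0 < c) (hx : ∀ i, 0 < x i) : 0 < rho0 x + c * rho1 x := by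
  have h := eps1_pos (e0act_pos hc hx)
  rwa [eps1_e0act hc hx, div_pos_iff_of_pos_right (eps0_pos hx)] at h

theorem crystalMatrix_e0act_e1act_e0act (hc : 0 < c) (hd : 0 < d) (hx : ∀ i, 0 < x i) :
    crystalMatrix (e0act c (e1act (c * d) (e0act d x))) =
      crystalMatrix (e1act d (e0act (c * d) (e1act c x))) := by
  have hcd := mul_pos hc hd
  have hy := e0act_pos hd hx
  have hz := e1act_pos hc hx
  have hε₀ := eps0_pos hx
  have hε₁ := eps1_pos hx
  have hε := eps0_mul_eps1 hx
  have hu := mul_rho0_add_rho1_pos hc hx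
  have hv := rho0_add_mul_rho1_pos hd hx
  rw [crystalMatrix_e0act hc (e1act_pos hcd hy), crystalMatrix_e1act hcd hy,
    crystalMatrix_e0act hd hx, crystalMatrix_e1act hd (e0act_pos hcd hz),
    crystalMatrix_e0act hcd hz, crystalMatrix_e1act hc hx, eps0_e1act_e0act hc hd hx,
    eps1_e0act_e1act hc hd hx, eps1_e0act hd hx, eps0_e1act hc hx]
  simp only [← Matrix.mul_assoc]
  congr 1
  refine transvection_braid (by decide) (by decide) (by decide) ?_ ?_ ?_
  · field_simp
    linear_combination (1 - c * d) * hε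
  · field_simp
    linear_combination (1 - c * d) * hε
  · generalize rho0 x + d * rho1 x = v at hv ⊢
    field_simp

end

end VermaRelation

/-- Verma relation between `e0` and `e1` (case `a01 = a10 = -1`). -/
theorem verma_e0_e1 (c1 c2 : ℝ) (hc1 : 0 < c1) (hc2 : 0 < c2)
    (x : Fin 6 → ℝ) (hx : ∀ i, 0 < x i) :
    e0act c1 (e1act (c1*c2) (e0act c2 x)) = e1act c2 (e0act (c1*c2) (e1act c1 x)) := by
  have hc := mul_pos hc1 hc2
  refine VermaRelation.crystalMatrix_injOn ?_ ?_
    (VermaRelation.crystalMatrix_e0act_e1act_e0act hc1 hc2 hx)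
  · exact VermaRelation.e0act_pos hc1
      (VermaRelation.e1act_pos hc (VermaRelation.e0act_pos hc2 hx))
  · exact VermaRelation.e1act_pos hc2
      (VermaRelation.e0act_pos hc (VermaRelation.e1act_pos hc1 hx))
end

section
/- Commutation of e0 and e2 (case a02 = a20 = 0 of the geometric crystal axioms in Theorem 5.3): for all c1, c2, x0,...,x5 ∈ ℝ_{>0} one has e0^{c1}(e2^{c2}(x)) = e2^{c2}(e0^{c1}(x)). -/
/-!
The action `e2` preserves `s = x3 / x2 + x4` and multiplies `p = x2 * x4` by `c`, so in the
coordinates `(x0, x1, x3, x5, s, p)` it only rescales `p`. In the same coordinates `e0` is a skew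
product: up to a common factor `x2 ^ 3` the polynomials `D`, `E`, `F`, `H` depend on `x2` and `x4`
only through `s`, and `G` is the weighted mean of `F` and `H` with weights `x4` and `x3 / x2`.
Hence `e0` acts on `(x0, x1, x3, x5, s)` independently of `p` and multiplies `p` by a factor
independent of `p`, so it commutes with rescaling `p`.
-/

/-- The quotient by the action `e2`, in the coordinates `x0`, `x1`, `x3`, `x5` and
`s = x3 / x2 + x4`. -/
@[ext]
structure E2Quotient where
  x0 : ℝ
  x1 : ℝ
  x3 : ℝ
  x5 : ℝ
  s : ℝ

namespace E2Quotient

/-- The positive part of the quotient, which receives the positive orthant. -/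
structure Positive (q : E2Quotient) : Prop where
  x0_pos : 0 < q.x0
  x1_pos : 0 < q.x1
  x3_pos : 0 < q.x3
  x5_pos : 0 < q.x5
  s_pos : 0 < q.s

/-- `D / x2 ^ 3` for the polynomial `D` of `e0act c`, in the quotient coordinates;
its value at `c = 1` is `E / x2 ^ 3`. -/
def D (c : ℝ) (q : E2Quotient) : ℝ :=
  c ^ 2 * q.x0 ^ 2 * q.x3 + q.x1 * q.x3 ^ 2 * q.x5
    + c * q.x0 * (q.x3 ^ 2 + q.x1 * q.s ^ 3 + q.x1 * q.x3 * q.x5)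

/-- `F / x2 ^ 3` for the polynomial `F` of `e0act c`, in the quotient coordinates. -/
def F (c : ℝ) (q : E2Quotient) : ℝ :=
  c * q.x0 ^ 2 * q.x3 + q.x1 * q.x3 ^ 2 * q.x5
    + q.x0 * (q.x3 ^ 2 + c * q.x1 * q.s ^ 3 + c * q.x1 * q.x3 * q.x5)

/-- `H / x2 ^ 3` for the polynomial `H` of `e0act c`, in the quotient coordinates. -/
def H (c : ℝ) (q : E2Quotient) : ℝ :=
  c * q.x0 ^ 2 * q.x3 + q.x1 * q.x3 ^ 2 * q.x5
    + q.x0 * (q.x3 ^ 2 + q.x1 * q.s ^ 3 + c * q.x1 * q.x3 * q.x5)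

/-- The map induced by `e0act c` on the quotient by `e2`. -/
noncomputable def e0 (c : ℝ) (q : E2Quotient) : E2Quotient where
  x0 := q.D c / (c * q.D 1) * q.x0
  x1 := q.F c / (c * q.D 1) * q.x1
  x3 := q.D c * q.H c / (c ^ 2 * q.D 1 * q.F c) * q.x3
  x5 := q.D c / (c * q.H c) * q.x5
  s := q.D c / (c * q.F c) * q.s

/-- The factor by which `e0act c` multiplies the fibre coordinate `x2 * x4`. -/
noncomputable def e0Multiplier (c : ℝ) (q : E2Quotient) : ℝ :=
  q.D c / (c ^ 2 * q.D 1)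

variable {c : ℝ} {q : E2Quotient}

theorem Positive.D_pos (hq : q.Positive) (hc : 0 < c) : 0 < q.D c := by
  obtain ⟨h0, h1, h3, h5, hs⟩ := hq
  unfold D
  positivity

theorem Positive.F_pos (hq : q.Positive) (hc : 0 < c) : 0 < q.F c := by
  obtain ⟨h0, h1, h3, h5, hs⟩ := hq
  unfold F
  positivity

theorem Positive.H_pos (hq : q.Positive) (hc : 0 < c) : 0 < q.H c := by
  obtain ⟨h0, h1, h3, h5, hs⟩ := hq
  unfold H
  positivity

theorem Positive.e0 (hq : q.Positive) (hc : 0 < c) : (q.e0 c).Positive := by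
  have hD := hq.D_pos hc
  have hE := hq.D_pos one_pos
  have hF := hq.F_pos hc
  have hH := hq.H_pos hc
  obtain ⟨h0, h1, h3, h5, hs⟩ := hq
  constructor <;> dsimp only [E2Quotient.e0] <;> positivity

end E2Quotient

/-- The projection to the quotient by the action `e2`. -/
noncomputable def e2Quotient (x : Fin 6 → ℝ) : E2Quotient :=
  ⟨x 0, x 1, x 3, x 5, x 3 / x 2 + x 4⟩

/-- The coordinate along the fibres of `e2Quotient`, on which `e2` acts by scaling. -/
def e2Fiber (x : Fin 6 → ℝ) : ℝ :=
  x 2 * x 4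

/-- The quotient `G / x2 ^ 3` for the polynomial `G` of `e0act c`, written as the mean of `F` and
`H` with weights `x4` and `x3 / x2`. -/
noncomputable def e0G (c : ℝ) (x : Fin 6 → ℝ) : ℝ :=
  ((e2Quotient x).F c * x 4 + (e2Quotient x).H c * (x 3 / x 2)) / (e2Quotient x).s

section

variable {c : ℝ} {x y : Fin 6 → ℝ}

theorem e2Quotient_positive (hx : ∀ i, 0 < x i) : (e2Quotient x).Positive :=
  ⟨hx 0, hx 1, hx 3, hx 5, add_pos (div_pos (hx 3) (hx 2)) (hx 4)⟩

theorem e0G_pos (hc : 0 < c) (hx : ∀ i, 0 < x i) : 0 < e0G c x := by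
  have hq := e2Quotient_positive hx
  exact div_pos (add_pos (mul_pos (hq.F_pos hc) (hx 4))
    (mul_pos (hq.H_pos hc) (div_pos (hx 3) (hx 2)))) hq.s_pos

theorem e0G_mul_s (hs : (e2Quotient x).s ≠ 0) :
    e0G c x * (e2Quotient x).s = (e2Quotient x).F c * x 4 + (e2Quotient x).H c * (x 3 / x 2) :=
  div_mul_cancel₀ _ hs

theorem e2Quotient_s_mul (h2 : x 2 ≠ 0) : (e2Quotient x).s * x 2 = x 3 + e2Fiber x := by
  simp only [e2Quotient, e2Fiber]
  field_simp

theorem eq_of_e2Quotient_eq_of_e2Fiber_eq (hx : x 2 ≠ 0) (hy : y 2 ≠ 0)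
    (hs : (e2Quotient x).s ≠ 0) (hq : e2Quotient x = e2Quotient y)
    (hp : e2Fiber x = e2Fiber y) : x = y := by
  have h3 : x 3 = y 3 := congrArg E2Quotient.x3 hq
  have h2 : x 2 = y 2 := by
    refine mul_left_cancel₀ hs ?_
    rw [e2Quotient_s_mul hx, h3, hp, ← e2Quotient_s_mul hy, hq]
  have h4 : x 4 = y 4 := by
    refine mul_left_cancel₀ hx ?_
    calc x 2 * x 4 = y 2 * y 4 := hp
      _ = x 2 * y 4 := by rw [h2]
  ext i
  fin_cases i
  exacts [congrArg E2Quotient.x0 hq, congrArg E2Quotient.x1 hq, h2, h3, h4,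
    congrArg E2Quotient.x5 hq]

theorem e2act_eq (h1 : x 1 ≠ 0) (h2 : x 2 ≠ 0) (h4 : x 4 ≠ 0) :
    e2act c x =
      ![x 0, x 1, (c * e2Fiber x + x 3) / (e2Fiber x + x 3) * x 2, x 3,
        c * (e2Fiber x + x 3) / (c * e2Fiber x + x 3) * x 4, x 5] := by
  unfold e2act
  extract_lets x0 x1 x2 x3 x4 x5 A B
  subst x0 x1 x2 x3 x4 x5
  have hk : x 1 / (x 2 ^ 2 * x 4) ≠ 0 := by positivity
  have hA : A = x 1 / (x 2 ^ 2 * x 4) * (e2Fiber x + x 3) := by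
    simp only [A, e2Fiber]
    field_simp
  have hB : B = x 1 / (x 2 ^ 2 * x 4) * (c * e2Fiber x + x 3) := by
    simp only [B, e2Fiber]
    field_simp
  rw [hA, hB, mul_div_mul_left _ _ hk, mul_left_comm c, mul_div_mul_left _ _ hk]

theorem e2act_pos (hc : 0 < c) (hx : ∀ i, 0 < x i) : ∀ i, 0 < e2act c x i := by
  have hp : 0 < e2Fiber x := mul_pos (hx 2) (hx 4)
  have h3 := hx 3
  rw [e2act_eq (hx 1).ne' (hx 2).ne' (hx 4).ne']
  intro i
  have hi := hx i
  fin_cases i <;> dsimp at hi ⊢ <;> positivity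

theorem e2Quotient_e2act (hc : 0 < c) (hx : ∀ i, 0 < x i) :
    e2Quotient (e2act c x) = e2Quotient x := by
  have h2 := hx 2
  have h3 := hx 3
  have h4 := hx 4
  rw [e2act_eq (hx 1).ne' h2.ne' h4.ne']
  simp only [e2Quotient, e2Fiber, Matrix.cons_val, E2Quotient.mk.injEq, true_and]
  field_simp
  ring

theorem e2Fiber_e2act (hc : 0 < c) (hx : ∀ i, 0 < x i) :
    e2Fiber (e2act c x) = c * e2Fiber x := by
  have h2 := hx 2
  have h3 := hx 3
  have h4 := hx 4
  rw [e2act_eq (hx 1).ne' h2.ne' h4.ne']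
  simp only [e2Fiber, Matrix.cons_val]
  field_simp

theorem e0act_eq (h2 : x 2 ≠ 0) (hs : (e2Quotient x).s ≠ 0) :
    e0act c x =
      ![((e2Quotient x).e0 c).x0, ((e2Quotient x).e0 c).x1,
        e0G c x / (c * (e2Quotient x).D 1) * x 2, ((e2Quotient x).e0 c).x3,
        (e2Quotient x).D c / (c * e0G c x) * x 4, ((e2Quotient x).e0 c).x5] := by
  unfold e0act
  extract_lets x0 x1 x2 x3 x4 x5 D E F G H
  subst x0 x1 x2 x3 x4 x5
  have hD : D = x 2 ^ 3 * (e2Quotient x).D c := by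
    simp only [D, E2Quotient.D, e2Quotient]
    field_simp
    ring
  have hE : E = x 2 ^ 3 * (e2Quotient x).D 1 := by
    simp only [E, E2Quotient.D, e2Quotient]
    field_simp
    ring
  have hF : F = x 2 ^ 3 * (e2Quotient x).F c := by
    simp only [F, E2Quotient.F, e2Quotient]
    field_simp
    ring
  have hH : H = x 2 ^ 3 * (e2Quotient x).H c := by
    simp only [H, E2Quotient.H, e2Quotient]
    field_simp
    ring
  have hG : G = x 2 ^ 3 * e0G c x := by
    refine mul_right_cancel₀ hs ?_
    rw [mul_assoc, e0G_mul_s hs]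
    simp only [G, E2Quotient.F, E2Quotient.H, e2Quotient]
    field_simp
    ring
  rw [hD, hE, hF, hG, hH]
  ext i
  fin_cases i <;> dsimp [E2Quotient.e0, e2Quotient] <;> field_simp

theorem e0act_pos (hc : 0 < c) (hx : ∀ i, 0 < x i) : ∀ i, 0 < e0act c x i := by
  have hq := e2Quotient_positive hx
  have hq' := hq.e0 hc
  have hD := hq.D_pos hc
  have hE := hq.D_pos one_pos
  have hG := e0G_pos hc hx
  have h2 := hx 2
  have h4 := hx 4
  rw [e0act_eq h2.ne' hq.s_pos.ne']
  intro i
  fin_cases i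
  exacts [hq'.x0_pos, hq'.x1_pos, by dsimp; positivity, hq'.x3_pos, by dsimp; positivity,
    hq'.x5_pos]

theorem e2Quotient_e0act (hc : 0 < c) (hx : ∀ i, 0 < x i) :
    e2Quotient (e0act c x) = (e2Quotient x).e0 c := by
  have hq := e2Quotient_positive hx
  have hE := hq.D_pos one_pos
  have hF := hq.F_pos hc
  have hG := e0G_pos hc hx
  have h2 := hx 2
  rw [e0act_eq h2.ne' hq.s_pos.ne']
  refine E2Quotient.ext rfl rfl rfl rfl ?_
  set q := e2Quotient x
  calc
    (q.e0 c).x3 / (e0G c x / (c * q.D 1) * x 2) + q.D c / (c * e0G c x) * x 4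
    _ = q.D c / (c * q.F c * e0G c x) * (q.F c * x 4 + q.H c * (x 3 / x 2)) := by
      have hx3 : (q.e0 c).x3 = q.D c * q.H c / (c ^ 2 * q.D 1 * q.F c) * x 3 := rfl
      rw [hx3]
      field_simp
      ring
    _ = q.D c / (c * q.F c * e0G c x) * (e0G c x * q.s) := by rw [e0G_mul_s hq.s_pos.ne']
    _ = (q.e0 c).s := by
      dsimp only [E2Quotient.e0]
      field_simp

theorem e2Fiber_e0act (hc : 0 < c) (hx : ∀ i, 0 < x i) :
    e2Fiber (e0act c x) = (e2Quotient x).e0Multiplier c * e2Fiber x := by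
  have hq := e2Quotient_positive hx
  have hG := e0G_pos hc hx
  rw [e0act_eq (hx 2).ne' hq.s_pos.ne']
  simp only [e2Fiber, E2Quotient.e0Multiplier, Matrix.cons_val]
  field_simp

end

/-- Commutation of `e0` and `e2` (case `a02 = a20 = 0`). -/
theorem e0_e2_commute (c1 c2 : ℝ) (hc1 : 0 < c1) (hc2 : 0 < c2)
    (x : Fin 6 → ℝ) (hx : ∀ i, 0 < x i) :
    e0act c1 (e2act c2 x) = e2act c2 (e0act c1 x) := by
  have hy := e2act_pos hc2 hx
  have hz := e0act_pos hc1 hx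
  apply eq_of_e2Quotient_eq_of_e2Fiber_eq (e0act_pos hc1 hy 2).ne' (e2act_pos hc2 hz 2).ne'
    (e2Quotient_positive (e0act_pos hc1 hy)).s_pos.ne'
  · rw [e2Quotient_e0act hc1 hy, e2Quotient_e2act hc2 hx, e2Quotient_e2act hc2 hz,
      e2Quotient_e0act hc1 hx]
  · rw [e2Fiber_e0act hc1 hy, e2Quotient_e2act hc2 hx, e2Fiber_e2act hc2 hx,
      e2Fiber_e2act hc2 hz, e2Fiber_e0act hc1 hx, mul_left_comm]
end

section
/- G2-type Verma relation between e1 and e2 (case a21 = -3, a12 = -1 of the geometric crystal axioms in Theorem 5.3): for all c1, c2, x0,...,x5 ∈ ℝ_{>0} one has e2^{c1} ∘ e1^{c1^3 c2} ∘ e2^{c1^2 c2} ∘ e1^{c1^3 c2^2} ∘ e2^{c1 c2} ∘ e1^{c2} (x) = e1^{c2} ∘ e2^{c1 c2} ∘ e1^{c1^3 c2^2} ∘ e2^{c1^2 c2} ∘ e1^{c1^3 c2} ∘ e2^{c1} (x). -/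
section Verma

variable {C M : Type*} [CommMonoid C] [Monoid M] {a b b₁ b₂ b₃ : C → M}

/-- The Verma relation of type `A₂`: the parametrized braid relation between the crystal operators
of two nodes joined by a simple edge. The parameters form a commutative monoid `C`, and the
operators take values in an arbitrary monoid `M`, such as the self-maps of a crystal. -/
def VermaA2 (a b : C → M) : Prop :=
  ∀ s t, a s * b (s * t) * a t = b t * a (s * t) * b s

/-- The Verma relation of type `G₂`, with `a` at the node for which the Cartan matrix entries are
`a_{ba} = -3` and `a_{ab} = -1`. -/
def VermaG2 (a b : C → M) : Prop :=
  ∀ s t, b s * a (s ^ 3 * t) * b (s ^ 2 * t) * a (s ^ 3 * t ^ 2) * b (s * t) * a t =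
    a t * b (s * t) * a (s ^ 3 * t ^ 2) * b (s ^ 2 * t) * a (s ^ 3 * t) * b s

lemma VermaA2.symm (h : VermaA2 a b) : VermaA2 b a := fun s t ↦ by
  rw [mul_comm s t, h t s]

theorem VermaA2.vermaA3 (h₁ : VermaA2 a b₁) (h₂ : VermaA2 a b₂)
    (h₁₂ : ∀ s t, Commute (b₁ s) (b₂ t)) (x y t : C) :
    b₁ x * b₂ y * a (x * y * t) * b₁ (y * t) * b₂ (x * t) * a t =
      a t * b₁ (x * t) * b₂ (y * t) * a (x * y * t) * b₁ y * b₂ x :=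
  calc
    _ = b₁ x * (b₂ y * a (y * (x * t)) * b₂ (x * t)) * b₁ (y * t) * a t := by
        simp only [mul_assoc, mul_left_comm y, (h₁₂ _ _).left_comm]
    _ = b₁ x * a (x * t) * b₂ (y * (x * t)) * (a y * b₁ (y * t) * a t) := by
        rw [h₂.symm]
        simp only [mul_assoc]
    _ = (b₁ x * a (x * t) * b₁ t) * b₂ (x * (y * t)) * a (y * t) * b₁ y := by
        rw [h₁]
        simp only [mul_assoc, mul_left_comm y, (h₁₂ _ _).left_comm]
    _ = a t * b₁ (x * t) * (a x * b₂ (x * (y * t)) * a (y * t)) * b₁ y := by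
        rw [h₁.symm]
        simp only [mul_assoc]
    _ = a t * b₁ (x * t) * b₂ (y * t) * a (x * y * t) * b₁ y * b₂ x := by
        rw [h₂]
        simp only [mul_assoc, (h₁₂ _ _).eq, (h₁₂ _ _).left_comm]

theorem VermaA2.vermaD4 (h₁ : VermaA2 a b₁) (h₂ : VermaA2 a b₂) (h₃ : VermaA2 a b₃)
    (h₁₂ : ∀ s t, Commute (b₁ s) (b₂ t)) (h₁₃ : ∀ s t, Commute (b₁ s) (b₃ t))
    (h₂₃ : ∀ s t, Commute (b₂ s) (b₃ t)) (x y z t : C) :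
    b₁ x * b₂ y * b₃ z * a (x * y * z * t) *
        (b₁ (y * z * t) * b₂ (x * z * t) * b₃ (x * y * t)) * a (x * y * z * t ^ 2) *
        (b₁ (x * t) * b₂ (y * t) * b₃ (z * t)) * a t =
      a t * (b₁ (x * t) * b₂ (y * t) * b₃ (z * t)) * a (x * y * z * t ^ 2) *
        (b₁ (y * z * t) * b₂ (x * z * t) * b₃ (x * y * t)) * a (x * y * z * t) *
        (b₁ x * b₂ y * b₃ z) := by
  have vermaA3 := h₁.vermaA3 h₂ h₁₂
  -- Parentheses around a subword mark where the next relation is applied.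
  calc
    _ = b₁ x * b₂ y * (b₃ z * a (z * (x * y * t)) * b₃ (x * y * t)) *
          b₁ (y * t * z) * b₂ (x * t * z) * a (y * t * (x * t) * z) * b₁ (x * t) * b₂ (y * t) *
          b₃ (z * t) * a t := by
        simp only [mul_assoc, pow_two, mul_comm, mul_left_comm,
          (h₁₃ _ _).left_comm, (h₂₃ _ _).left_comm]
    _ = b₁ x * b₂ y * a (x * y * t) * b₃ (z * (x * y * t)) *
          (a z * b₁ (y * t * z) * b₂ (x * t * z) * a (y * t * (x * t) * z) * b₁ (x * t) *
            b₂ (y * t)) * b₃ (z * t) * a t := by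
        rw [h₃.symm]
        simp only [mul_assoc]
    _ = b₁ x * b₂ y * a (x * y * t) * b₃ (x * y * z * t) * b₁ (y * t) * b₂ (x * t) *
          a (x * y * z * t * t) * b₁ (x * z * t) * b₂ (y * z * t) * (a z * b₃ (z * t) * a t) := by
        rw [← vermaA3]
        simp only [mul_assoc, mul_comm, mul_left_comm]
    _ = b₁ x * b₂ y * a (x * y * t) * b₁ (y * t) * b₂ (x * t) *
          (b₃ (x * y * z * t) * a (x * y * z * t * t) * b₃ t) * b₁ (x * z * t) * b₂ (y * z * t) *
          a (z * t) * b₃ z := by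
        rw [h₃]
        simp only [mul_assoc, (h₁₃ _ _).left_comm, (h₂₃ _ _).left_comm]
    _ = (b₁ x * b₂ y * a (x * y * t) * b₁ (y * t) * b₂ (x * t) * a t) *
          b₃ (x * y * z * t * t) * a (x * y * z * t) * b₁ (x * z * t) * b₂ (y * z * t) *
          a (z * t) * b₃ z := by
        rw [h₃.symm]
        simp only [mul_assoc]
    _ = a t * b₁ (x * t) * b₂ (y * t) * a (x * y * t) * b₃ (x * y * z * t * t) *
          (b₁ y * b₂ x * a (y * x * (z * t)) * b₁ (x * (z * t)) * b₂ (y * (z * t)) * a (z * t)) *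
          b₃ z := by
        rw [vermaA3]
        simp only [mul_assoc, mul_left_comm y, (h₁₃ _ _).left_comm, (h₂₃ _ _).left_comm]
    _ = a t * b₁ (x * t) * b₂ (y * t) * (a (x * y * t) * b₃ (x * y * t * (z * t)) * a (z * t)) *
          b₁ (y * z * t) * b₂ (x * z * t) * a (x * y * z * t) * b₁ x * b₂ y * b₃ z := by
        rw [vermaA3]
        simp only [mul_assoc, mul_comm, mul_left_comm]
    _ = _ := by
        rw [h₃]
        simp only [mul_assoc, pow_two, mul_comm, mul_left_comm,
          (h₁₃ _ _).left_comm, (h₂₃ _ _).left_comm]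

theorem VermaA2.vermaG2 (h₁ : VermaA2 a b₁) (h₂ : VermaA2 a b₂) (h₃ : VermaA2 a b₃)
    (h₁₂ : ∀ s t, Commute (b₁ s) (b₂ t)) (h₁₃ : ∀ s t, Commute (b₁ s) (b₃ t))
    (h₂₃ : ∀ s t, Commute (b₂ s) (b₃ t)) :
    VermaG2 a (fun s ↦ b₁ s * b₂ s * b₃ s) := fun s t ↦ by
  simpa only [← pow_two, ← pow_succ, Nat.reduceAdd] using h₁.vermaD4 h₂ h₃ h₁₂ h₁₃ h₂₃ s s s t

end Verma

lemma prod_update_mul_self {ι M : Type*} [Fintype ι] [DecidableEq ι] [CommMonoid M]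
    (f : ι → M) (j : ι) (m : M) :
    ∏ k, Function.update f j (m * f j) k = m * ∏ k, f k := by
  rw [Finset.prod_update_of_mem (Finset.mem_univ j), mul_assoc,
    ← Finset.prod_eq_mul_prod_sdiff_singleton_of_mem (Finset.mem_univ j)]

local notation:max K "₊" => {r : K // 0 < r}

section StarCrystal

variable {K ι : Type*} [Field K] [LinearOrder K] [IsStrictOrderedRing K]

@[simp]
lemma coe_div_pos (r s : K₊) : ((r / s : K₊) : K) = r / s := by
  rw [div_eq_mul_inv, Positive.val_mul, Positive.coe_inv, div_eq_mul_inv]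

/-- The factor by which the central operator with parameter `c` multiplies `x₁`, in terms of the
ratios `StarPoint.u` and `StarPoint.v`. -/
def centerMul₁ (c u v : K₊) : K₊ := (c + u + v) / (1 + u + v)

/-- The factor by which the central operator with parameter `c` multiplies `x₁ * x₃`. The product
`x₁ * x₃ * x₅` is multiplied by `c`, so this and `centerMul₁` determine the operator. -/
def centerMul₁₃ (c u v : K₊) : K₊ := (c + c * u + v) / (1 + u + v)

/-- The factor by which the leaf operator with parameter `c` multiplies `x₂ j`, in terms of the
ratio `StarPoint.w`. The product `x₂ j * x₄ j` is multiplied by `c`. -/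
def leafMul (c w : K₊) : K₊ := (c + w) / (1 + w)

/-- A point of the simply-laced positive geometric crystal attached to a star-shaped diagram with
set of leaves `ι`; for three leaves, the diagram is `D₄`. The coordinates are those of the `G₂`
crystal, except that the leaves have separate coordinates `x₂ j` and `x₄ j`. -/
@[ext]
structure StarPoint (K ι : Type*) [Zero K] [LT K] where
  x₀ : K₊
  x₁ : K₊
  x₂ : ι → K₊
  x₃ : K₊
  x₄ : ι → K₊
  x₅ : K₊

namespace StarPoint

/-- The ratio of the second to the first monomial in the leaf operator at `j`. -/
def w (p : StarPoint K ι) (j : ι) : K₊ := p.x₃ / (p.x₂ j * p.x₄ j)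

section Leaf

variable [DecidableEq ι] (j : ι) (c s t : K₊) (p : StarPoint K ι)

/-- The crystal operator at the leaf `j` with parameter `c`. -/
@[simps]
def leaf : StarPoint K ι where
  x₀ := p.x₀
  x₁ := p.x₁
  x₂ := Function.update p.x₂ j (leafMul c (p.w j) * p.x₂ j)
  x₃ := p.x₃
  x₄ := Function.update p.x₄ j (c / leafMul c (p.w j) * p.x₄ j)
  x₅ := p.x₅

lemma w_leaf_self : (p.leaf j c).w j = p.w j / c := by
  simp only [w, leaf, Function.update_self]
  rw [mul_mul_mul_comm, mul_div_cancel, mul_comm c, div_div]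

variable {j} {k : ι}

lemma w_leaf_of_ne (h : j ≠ k) : (p.leaf j c).w k = p.w k := by
  simp only [w, leaf, Function.update_of_ne h.symm]

lemma leaf_comm (h : j ≠ k) : (p.leaf k t).leaf j s = (p.leaf j s).leaf k t := by
  rw [leaf, leaf.eq_1 k t (leaf ..), w_leaf_of_ne _ _ h, w_leaf_of_ne _ _ h.symm]
  simp only [leaf, Function.update_of_ne h, Function.update_of_ne h.symm, Function.update_comm h]

end Leaf

section Center

variable [Fintype ι] (c s t : K₊) (p : StarPoint K ι) (j : ι)

/-- The ratio of the second to the first monomial in the central operator. -/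
def u : K₊ := (∏ j, p.x₂ j) / (p.x₁ * p.x₃)

/-- The ratio of the third to the first monomial in the central operator. -/
def v : K₊ := (∏ j, p.x₂ j) * (∏ j, p.x₄ j) / (p.x₁ * p.x₃ ^ 2 * p.x₅)

/-- The crystal operator at the central node with parameter `c`. -/
@[simps]
def center : StarPoint K ι where
  x₀ := p.x₀
  x₁ := centerMul₁ c p.u p.v * p.x₁
  x₂ := p.x₂
  x₃ := centerMul₁₃ c p.u p.v / centerMul₁ c p.u p.v * p.x₃
  x₄ := p.x₄
  x₅ := c / centerMul₁₃ c p.u p.v * p.x₅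

lemma u_center : (p.center c).u = p.u / centerMul₁₃ c p.u p.v := by
  rw [u, center_x₁, center_x₃, mul_mul_mul_comm, mul_div_cancel, mul_comm, ← div_div]
  rfl

lemma v_center :
    (p.center c).v = p.v * centerMul₁ c p.u p.v / (c * centerMul₁₃ c p.u p.v) := by
  apply Subtype.ext
  have := (centerMul₁ c p.u p.v).2.ne'
  have := (centerMul₁₃ c p.u p.v).2.ne'
  simp only [v, center, coe_div_pos, Positive.val_mul, Positive.val_pow]
  field_simp

lemma w_center :
    (p.center c).w j = centerMul₁₃ c p.u p.v / centerMul₁ c p.u p.v * p.w j := by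
  rw [w, center, mul_div_assoc, ← w]

variable [DecidableEq ι]

lemma u_leaf : (p.leaf j c).u = leafMul c (p.w j) * p.u := by
  simp only [u, leaf, prod_update_mul_self, mul_div_assoc]

lemma v_leaf : (p.leaf j c).v = c * p.v := by
  simp only [v, leaf, prod_update_mul_self]
  rw [mul_mul_mul_comm, mul_div_cancel, mul_div_assoc]

lemma centerMul₁_braid :
    centerMul₁ s ((p.center t).leaf j (s * t)).u ((p.center t).leaf j (s * t)).v *
        centerMul₁ t p.u p.v =
      centerMul₁ (s * t) (p.leaf j s).u (p.leaf j s).v := by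
  simp only [u_leaf, v_leaf, u_center, v_center, w_center]
  generalize p.u = u, p.v = v, p.w j = w
  rcases s, t, u, v, w with ⟨⟨s, hs⟩, ⟨t, ht⟩, ⟨u, hu⟩, ⟨v, hv⟩, ⟨w, hw⟩⟩
  apply Subtype.ext
  simp only [centerMul₁, centerMul₁₃, leafMul, coe_div_pos, Positive.coe_add, Positive.val_mul,
    Positive.val_one]
  field_simp
  ring

lemma centerMul₁₃_braid :
    centerMul₁₃ s ((p.center t).leaf j (s * t)).u ((p.center t).leaf j (s * t)).v *
        centerMul₁₃ t p.u p.v =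
      centerMul₁₃ (s * t) (p.leaf j s).u (p.leaf j s).v := by
  simp only [u_leaf, v_leaf, u_center, v_center, w_center]
  generalize p.u = u, p.v = v, p.w j = w
  rcases s, t, u, v, w with ⟨⟨s, hs⟩, ⟨t, ht⟩, ⟨u, hu⟩, ⟨v, hv⟩, ⟨w, hw⟩⟩
  apply Subtype.ext
  simp only [centerMul₁, centerMul₁₃, leafMul, coe_div_pos, Positive.coe_add, Positive.val_mul,
    Positive.val_one]
  field_simp
  ring

lemma leafMul_braid :
    leafMul t (((p.leaf j s).center (s * t)).w j) * leafMul s (p.w j) =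
      leafMul (s * t) ((p.center t).w j) := by
  simp only [u_leaf, v_leaf, w_leaf_self, w_center]
  generalize p.u = u, p.v = v, p.w j = w
  rcases s, t, u, v, w with ⟨⟨s, hs⟩, ⟨t, ht⟩, ⟨u, hu⟩, ⟨v, hv⟩, ⟨w, hw⟩⟩
  apply Subtype.ext
  simp only [centerMul₁, centerMul₁₃, leafMul, coe_div_pos, Positive.coe_add, Positive.val_mul,
    Positive.val_one]
  field_simp
  ring

theorem vermaA2_center_leaf :
    VermaA2 (C := K₊) (M := Function.End (StarPoint K ι)) center (leaf j) := by
  refine fun s t ↦ funext fun p ↦ ?_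
  change ((p.center t).leaf j (s * t)).center s = ((p.leaf j s).center (s * t)).leaf j t
  ext1
  · rfl
  · simp only [leaf_x₁, center_x₁, ← centerMul₁_braid, mul_assoc]
  · funext k
    obtain rfl | hk := eq_or_ne k j
    · simp only [leaf_x₂, center_x₂, Function.update_self, ← leafMul_braid, mul_assoc]
    · simp only [leaf_x₂, center_x₂, Function.update_of_ne hk]
  · simp only [leaf_x₃, center_x₃, ← centerMul₁_braid, ← centerMul₁₃_braid, ← mul_assoc,
      div_mul_div_comm]
  · funext k
    obtain rfl | hk := eq_or_ne k j
    · simp only [leaf_x₄, center_x₄, Function.update_self, ← leafMul_braid, ← mul_assoc,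
        div_mul_div_comm, mul_comm t s]
    · simp only [leaf_x₄, center_x₄, Function.update_of_ne hk]
  · simp only [leaf_x₅, center_x₅, ← centerMul₁₃_braid, ← mul_assoc, div_mul_div_comm]

end Center

section Triality

variable (c : K₊) (p : StarPoint K (Fin 3))

/-- The product of the three leaf operators of the `D₄` crystal, all with the same parameter. It
folds to the operator of the second node of `G₂`. -/
def leaves : StarPoint K (Fin 3) := ((p.leaf 2 c).leaf 1 c).leaf 0 c

theorem vermaG2_center_leaves :
    VermaG2 (C := K₊) (M := Function.End (StarPoint K (Fin 3))) center leaves := by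
  have commute {i j : Fin 3} (h : i ≠ j) (s t : K₊) :
      Commute (S := Function.End (StarPoint K (Fin 3))) (leaf i s) (leaf j t) :=
    funext fun p ↦ leaf_comm s t p h
  exact VermaA2.vermaG2 (M := Function.End (StarPoint K (Fin 3)))
    (vermaA2_center_leaf 0) (vermaA2_center_leaf 1) (vermaA2_center_leaf 2)
    (commute (by decide)) (commute (by decide)) (commute (by decide))

lemma leaves_x₂ (j : Fin 3) : (p.leaves c).x₂ j = leafMul c (p.w j) * p.x₂ j := by
  fin_cases j <;> simp [leaves, w_leaf_of_ne]

lemma leaves_x₄ (j : Fin 3) : (p.leaves c).x₄ j = c / leafMul c (p.w j) * p.x₄ j := by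
  fin_cases j <;> simp [leaves, w_leaf_of_ne]

end Triality

end StarPoint

end StarCrystal

section Folding

open StarPoint

/-- The point `x` of the `G₂` crystal is the folding of the point `p` of the `D₄` crystal: the leaf
coordinates of `p` do not depend on the leaf, and `x` consists of the common values. -/
structure IsFolding (x : Fin 6 → ℝ) (p : StarPoint ℝ (Fin 3)) : Prop where
  x₀ : x 0 = p.x₀
  x₁ : x 1 = p.x₁
  x₂ : ∀ j, p.x₂ j = x 2
  x₃ : x 3 = p.x₃
  x₄ : ∀ j, p.x₄ j = x 4
  x₅ : x 5 = p.x₅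

namespace IsFolding

variable {x y : Fin 6 → ℝ} {p q : StarPoint ℝ (Fin 3)}

lemma exists_of_pos (hx : ∀ i, 0 < x i) : ∃ p, IsFolding x p :=
  ⟨⟨⟨_, hx 0⟩, ⟨_, hx 1⟩, fun _ ↦ ⟨_, hx 2⟩, ⟨_, hx 3⟩, fun _ ↦ ⟨_, hx 4⟩, ⟨_, hx 5⟩⟩,
    rfl, rfl, fun _ ↦ rfl, rfl, fun _ ↦ rfl, rfl⟩

lemma eq_of_eq (hx : IsFolding x p) (hy : IsFolding y q) (h : p = q) : x = y := by
  subst h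
  funext i
  fin_cases i
  exacts [hx.x₀.trans hy.x₀.symm, hx.x₁.trans hy.x₁.symm, (hx.x₂ 0).symm.trans (hy.x₂ 0),
    hx.x₃.trans hy.x₃.symm, (hx.x₄ 0).symm.trans (hy.x₄ 0), hx.x₅.trans hy.x₅.symm]

lemma pos (h : IsFolding x p) :
    0 < x 0 ∧ 0 < x 1 ∧ 0 < x 2 ∧ 0 < x 3 ∧ 0 < x 4 ∧ 0 < x 5 := by
  rw [h.x₀, h.x₁, ← h.x₂ 0, h.x₃, ← h.x₄ 0, h.x₅]
  exact ⟨p.x₀.2, p.x₁.2, (p.x₂ 0).2, p.x₃.2, (p.x₄ 0).2, p.x₅.2⟩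

lemma coe_u (h : IsFolding x p) : (p.u : ℝ) = x 2 ^ 3 / (x 1 * x 3) := by
  simp only [u, coe_div_pos, Positive.val_mul, Fin.prod_univ_three, h.x₁, h.x₂, h.x₃,
    pow_succ, pow_zero, one_mul]

lemma coe_v (h : IsFolding x p) :
    (p.v : ℝ) = x 2 ^ 3 * x 4 ^ 3 / (x 1 * x 3 ^ 2 * x 5) := by
  simp only [v, coe_div_pos, Positive.val_mul, Fin.prod_univ_three, h.x₁, h.x₂, h.x₃, h.x₄, h.x₅,
    pow_succ, pow_zero, one_mul]

lemma coe_w (h : IsFolding x p) (j : Fin 3) : (p.w j : ℝ) = x 3 / (x 2 * x 4) := by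
  simp only [w, coe_div_pos, Positive.val_mul, h.x₂, h.x₃, h.x₄]

lemma e1act_center (h : IsFolding x p) (c : ℝ₊) : IsFolding (e1act c x) (p.center c) := by
  obtain ⟨h₀, h₁, h₂, h₃, h₄, h₅⟩ := h.pos
  have hc := c.2
  constructor
  · exact h.x₀
  · simp only [e1act, center, centerMul₁, h.coe_u, h.coe_v, h.x₁.symm, coe_div_pos,
      Positive.val_mul, Positive.coe_add, Positive.val_one, Matrix.cons_val]
    field_simp
  · exact h.x₂
  · simp only [e1act, center, centerMul₁, centerMul₁₃, h.coe_u, h.coe_v, h.x₃.symm, coe_div_pos,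
      Positive.val_mul, Positive.coe_add, Positive.val_one, Matrix.cons_val]
    field_simp
  · exact h.x₄
  · simp only [e1act, center, centerMul₁₃, h.coe_u, h.coe_v, h.x₅.symm, coe_div_pos,
      Positive.val_mul, Positive.coe_add, Positive.val_one, Matrix.cons_val]
    field_simp

lemma e2act_leaves (h : IsFolding x p) (c : ℝ₊) : IsFolding (e2act c x) (p.leaves c) := by
  obtain ⟨-, h₁, h₂, h₃, h₄, -⟩ := h.pos
  have hc := c.2
  constructor
  · exact h.x₀
  · exact h.x₁
  · intro j
    simp only [leaves_x₂, e2act, leafMul, h.coe_w, h.x₂, coe_div_pos,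
      Positive.val_mul, Positive.coe_add, Positive.val_one, Matrix.cons_val]
    field_simp
  · exact h.x₃
  · intro j
    simp only [leaves_x₄, e2act, leafMul, h.coe_w, h.x₄, coe_div_pos,
      Positive.val_mul, Positive.coe_add, Positive.val_one, Matrix.cons_val]
    field_simp
  · exact h.x₅

end IsFolding

end Folding

/-- `G2`-type Verma relation between `e1` and `e2` (case `a21 = -3`, `a12 = -1`). -/
theorem verma_e1_e2_G2 (c1 c2 : ℝ) (hc1 : 0 < c1) (hc2 : 0 < c2)
    (x : Fin 6 → ℝ) (hx : ∀ i, 0 < x i) :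
    e2act c1 (e1act (c1^3*c2) (e2act (c1^2*c2) (e1act (c1^3*c2^2) (e2act (c1*c2)
      (e1act c2 x))))) =
    e1act c2 (e2act (c1*c2) (e1act (c1^3*c2^2) (e2act (c1^2*c2) (e1act (c1^3*c2)
      (e2act c1 x))))) := by
  obtain ⟨p, hp⟩ := IsFolding.exists_of_pos hx
  obtain ⟨s, rfl⟩ : ∃ s : ℝ₊, (s : ℝ) = c1 := ⟨⟨c1, hc1⟩, rfl⟩
  obtain ⟨t, rfl⟩ : ∃ t : ℝ₊, (t : ℝ) = c2 := ⟨⟨c2, hc2⟩, rfl⟩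
  have verma := congrFun (StarPoint.vermaG2_center_leaves s t) p
  have left := (((((hp.e1act_center t).e2act_leaves (s * t)).e1act_center
    (s ^ 3 * t ^ 2)).e2act_leaves (s ^ 2 * t)).e1act_center (s ^ 3 * t)).e2act_leaves s
  have right := (((((hp.e2act_leaves s).e1act_center (s ^ 3 * t)).e2act_leaves
    (s ^ 2 * t)).e1act_center (s ^ 3 * t ^ 2)).e2act_leaves (s * t)).e1act_center t
  exact left.eq_of_eq right verma
end

section
/- Character property of the e-actions (axiom (ii) of a geometric crystal, part of Theorem 5.3): for all i, j ∈ {0,1,2} and all c, x0,...,x5 ∈ ℝ_{>0} one has γ_j(e_i^c(x)) = c^{a_{ij}}·γ_j(x), where (a_{ij}) is the Cartan matrix of type G2^(1) with rows (2,-1,0), (-1,2,-1), (0,-3,2). -/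
noncomputable section

def eps1 (x : Fin 6 → ℝ) : ℝ :=
  x 0/x 1 + x 0*(x 2)^3/((x 1)^2*x 3) + x 0*(x 2)^3*(x 4)^3/((x 1)^2*(x 3)^2*x 5)

def eps2 (x : Fin 6 → ℝ) : ℝ := x 1/x 2 + x 1*x 3/((x 2)^2*x 4)

def eps0 (x : Fin 6 → ℝ) : ℝ :=
  ((x 0)^2*(x 2)^3*x 3 + x 1*(x 2)^3*(x 3)^2*x 5
      + x 0*(x 1*(x 3)^3 + 3*x 1*x 2*(x 3)^2*x 4 + 3*x 1*(x 2)^2*x 3*(x 4)^2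
          + (x 2)^3*((x 3)^2 + x 1*(x 4)^3 + x 1*x 3*x 5)))
    / ((x 0)^3*(x 2)^3*x 3)

def gamma0 (x : Fin 6 → ℝ) : ℝ := (x 0)^2/(x 1*x 3*x 5)

def gamma1 (x : Fin 6 → ℝ) : ℝ := (x 1)^2*(x 3)^2*(x 5)^2/(x 0*(x 2)^3*(x 4)^3)

def gamma2 (x : Fin 6 → ℝ) : ℝ := (x 2)^2*(x 4)^2/(x 1*x 3*x 5)

end

noncomputable section

def eact : Fin 3 → ℝ → (Fin 6 → ℝ) → (Fin 6 → ℝ) := ![e0act, e1act, e2act]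

def gammas : Fin 3 → (Fin 6 → ℝ) → ℝ := ![gamma0, gamma1, gamma2]

/-- the Cartan matrix of type `G2^(1)` -/
def cartanG2 : Matrix (Fin 3) (Fin 3) ℤ := !![2,-1,0; -1,2,-1; 0,-3,2]

end

/-! Group the coordinates by the nodes of the Dynkin diagram and set `u = (x₀, x₁x₃x₅, x₂x₄)`. Then
`γ_j = ∏ k, u_k ^ a_{kj}`, so `γ = (γ₀, γ₁, γ₂)` is the homomorphism `u ↦ u ^ A` of tori. The action
`e_i^c` multiplies `u` by the simple coroot `α_i^∨(c)`, whose image is `j ↦ c ^ a_{ij}`, and, when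
`i = 0`, also by some `(s, s², s)`. The latter lies in the kernel because `(1, 2, 1)`, the canonical
central element of the affine Lie algebra, is a left null vector of `A`. -/

theorem zpow_sum₀ {ι K : Type*} [CommGroupWithZero K] {a : K} (ha : a ≠ 0) (s : Finset ι)
    (f : ι → ℤ) : a ^ (∑ i ∈ s, f i) = ∏ i ∈ s, a ^ f i := by
  induction s using Finset.cons_induction with
  | empty => simp
  | cons i s hi ih => rw [Finset.sum_cons, Finset.prod_cons, zpow_add₀ ha, ih]

section MonomialMap

open scoped Matrix

variable {ι κ K : Type*} [Fintype ι] [CommGroupWithZero K]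

/-- The monomial map `u ↦ u ^ A` attached to an integer matrix `A`, whose exponents are read off
the columns of `A`; on tori it is the homomorphism induced by `A`. -/
def monomialMap (A : Matrix ι κ ℤ) (u : ι → K) : κ → K := fun j ↦ ∏ k, u k ^ A k j

theorem monomialMap_mul (A : Matrix ι κ ℤ) (u v : ι → K) :
    monomialMap A (u * v) = monomialMap A u * monomialMap A v := by
  funext j
  simp only [monomialMap, Pi.mul_apply, mul_zpow, Finset.prod_mul_distrib]

theorem monomialMap_mulSingle [DecidableEq ι] (A : Matrix ι κ ℤ) (i : ι) (c : K) :
    monomialMap A (Pi.mulSingle i c) = fun j ↦ c ^ A i j := by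
  funext j
  rw [monomialMap, Fintype.prod_eq_single i, Pi.mulSingle_eq_same]
  intro k hk
  rw [Pi.mulSingle_eq_of_ne hk, one_zpow]

theorem monomialMap_zpow (A : Matrix ι κ ℤ) {s : K} (hs : s ≠ 0) (m : ι → ℤ) :
    monomialMap A (fun k ↦ s ^ m k) = fun j ↦ s ^ (m ᵥ* A) j := by
  funext j
  simp only [monomialMap, Matrix.vecMul, dotProduct, ← zpow_mul, zpow_sum₀ hs]

theorem monomialMap_mul_of_vecMul_eq_zero [DecidableEq ι] {A : Matrix ι κ ℤ} {m : ι → ℤ}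
    (hm : m ᵥ* A = 0) {s : K} (hs : s ≠ 0) (i : ι) (c : K) (u : ι → K) (j : κ) :
    monomialMap A ((fun k ↦ s ^ m k) * Pi.mulSingle i c * u) j =
      c ^ A i j * monomialMap A u j := by
  simp only [monomialMap_mul, monomialMap_zpow A hs, monomialMap_mulSingle, hm, Pi.mul_apply,
    Pi.zero_apply, zpow_zero, one_mul]

end MonomialMap

section GeometricCrystal

open scoped Matrix

/-- The torus coordinates of `x`: entry `k` is the product of the coordinates attached to the node
`k` of the Dynkin diagram, where `x₀, …, x₅` are attached to `0, 1, 2, 1, 2, 1`. -/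
noncomputable def nodeProd (x : Fin 6 → ℝ) : Fin 3 → ℝ := ![x 0, x 1 * x 3 * x 5, x 2 * x 4]

/-- The coefficients of the canonical central element of the affine Lie algebra of type `G2^(1)` in
the simple coroots (the dual Kac labels). -/
def colabelG2 : Fin 3 → ℤ := ![1, 2, 1]

theorem colabelG2_vecMul_cartanG2 : colabelG2 ᵥ* cartanG2 = 0 := by
  decide

theorem gammas_eq_monomialMap (j : Fin 3) (x : Fin 6 → ℝ) :
    gammas j x = monomialMap cartanG2 (nodeProd x) j := by
  rw [monomialMap, Fin.prod_univ_three]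
  fin_cases j
  · change gamma0 x = x 0 ^ (2 : ℤ) * (x 1 * x 3 * x 5) ^ (-1 : ℤ) * (x 2 * x 4) ^ (0 : ℤ)
    simp only [gamma0, zpow_neg, zpow_ofNat]
    ring
  · change gamma1 x = x 0 ^ (-1 : ℤ) * (x 1 * x 3 * x 5) ^ (2 : ℤ) * (x 2 * x 4) ^ (-3 : ℤ)
    simp only [gamma1, zpow_neg, zpow_ofNat]
    ring
  · change gamma2 x = x 0 ^ (0 : ℤ) * (x 1 * x 3 * x 5) ^ (-1 : ℤ) * (x 2 * x 4) ^ (2 : ℤ)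
    simp only [gamma2, zpow_neg, zpow_ofNat]
    ring

variable {c : ℝ} {x : Fin 6 → ℝ}

theorem exists_e0act_eq (hc : 0 < c) (hx : ∀ k, 0 < x k) :
    ∃ D E F G H : ℝ, 0 < D ∧ 0 < E ∧ 0 < F ∧ 0 < G ∧ 0 < H ∧
      e0act c x = ![D / (c * E) * x 0, F / (c * E) * x 1, G / (c * E) * x 2,
        D * H / (c ^ 2 * E * F) * x 3, D / (c * G) * x 4, D / (c * H) * x 5] := by
  have h0 := hx 0; have h1 := hx 1; have h2 := hx 2
  have h3 := hx 3; have h4 := hx 4; have h5 := hx 5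
  refine ⟨_, _, _, _, _, ?_, ?_, ?_, ?_, ?_, rfl⟩ <;> positivity

theorem exists_e1act_eq (hc : 0 < c) (hx : ∀ k, 0 < x k) :
    ∃ A B C : ℝ, 0 < A ∧ 0 < B ∧ 0 < C ∧
      e1act c x = ![x 0, B / A * x 1, x 2, C / B * x 3, x 4, c * A / C * x 5] := by
  have h0 := hx 0; have h1 := hx 1; have h2 := hx 2
  have h3 := hx 3; have h4 := hx 4; have h5 := hx 5
  refine ⟨_, _, _, ?_, ?_, ?_, rfl⟩ <;> positivity

theorem exists_e2act_eq (hc : 0 < c) (hx : ∀ k, 0 < x k) :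
    ∃ A B : ℝ, 0 < A ∧ 0 < B ∧
      e2act c x = ![x 0, x 1, B / A * x 2, x 3, c * A / B * x 4, x 5] := by
  have h1 := hx 1; have h2 := hx 2; have h3 := hx 3; have h4 := hx 4
  refine ⟨_, _, ?_, ?_, rfl⟩ <;> positivity

theorem exists_nodeProd_e0act (hc : 0 < c) (hx : ∀ k, 0 < x k) :
    ∃ s : ℝ, s ≠ 0 ∧
      nodeProd (e0act c x) = (fun k ↦ s ^ colabelG2 k) * Pi.mulSingle 0 c * nodeProd x := by
  obtain ⟨D, E, F, G, H, hD, hE, hF, hG, hH, he⟩ := exists_e0act_eq hc hx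
  let s := D / (c ^ 2 * E)
  have node_zero : D / (c * E) * x 0 = s * c * x 0 := by
    simp only [s]
    field_simp
  have node_one : F / (c * E) * x 1 * (D * H / (c ^ 2 * E * F) * x 3) * (D / (c * H) * x 5) =
      s ^ 2 * (x 1 * x 3 * x 5) := by
    simp only [s]
    field_simp
  have node_two : G / (c * E) * x 2 * (D / (c * G) * x 4) = s * (x 2 * x 4) := by
    simp only [s]
    field_simp
  refine ⟨s, by positivity, ?_⟩
  rw [he]
  funext k
  fin_cases k <;> simp [nodeProd, colabelG2, node_zero, node_one, node_two]

theorem nodeProd_e1act (hc : 0 < c) (hx : ∀ k, 0 < x k) :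
    nodeProd (e1act c x) = Pi.mulSingle 1 c * nodeProd x := by
  obtain ⟨A, B, C, hA, hB, hC, he⟩ := exists_e1act_eq hc hx
  have node_one : B / A * x 1 * (C / B * x 3) * (c * A / C * x 5) = c * (x 1 * x 3 * x 5) := by
    field_simp
  rw [he]
  funext k
  fin_cases k <;> simp [nodeProd, node_one]

theorem nodeProd_e2act (hc : 0 < c) (hx : ∀ k, 0 < x k) :
    nodeProd (e2act c x) = Pi.mulSingle 2 c * nodeProd x := by
  obtain ⟨A, B, hA, hB, he⟩ := exists_e2act_eq hc hx
  have node_two : B / A * x 2 * (c * A / B * x 4) = c * (x 2 * x 4) := by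
    field_simp
  rw [he]
  funext k
  fin_cases k <;> simp [nodeProd, node_two]

theorem exists_nodeProd_eact (i : Fin 3) (hc : 0 < c) (hx : ∀ k, 0 < x k) :
    ∃ s : ℝ, s ≠ 0 ∧
      nodeProd (eact i c x) = (fun k ↦ s ^ colabelG2 k) * Pi.mulSingle i c * nodeProd x := by
  have one_zpow_colabel : (fun k ↦ (1 : ℝ) ^ colabelG2 k) = 1 := funext fun k ↦ one_zpow _
  fin_cases i
  · exact exists_nodeProd_e0act hc hx
  · exact ⟨1, one_ne_zero, by rw [one_zpow_colabel, one_mul]; exact nodeProd_e1act hc hx⟩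
  · exact ⟨1, one_ne_zero, by rw [one_zpow_colabel, one_mul]; exact nodeProd_e2act hc hx⟩

end GeometricCrystal

/-- Character property: `γ_j(e_i^c(x)) = c^{a_{ij}}·γ_j(x)`. -/
theorem gamma_eact (i j : Fin 3) (c : ℝ) (hc : 0 < c) (x : Fin 6 → ℝ) (hx : ∀ k, 0 < x k) :
    gammas j (eact i c x) = c ^ (cartanG2 i j) * gammas j x := by
  obtain ⟨s, hs, hnode⟩ := exists_nodeProd_eact i hc hx
  rw [gammas_eq_monomialMap, gammas_eq_monomialMap, hnode,
    monomialMap_mul_of_vecMul_eq_zero colabelG2_vecMul_cartanG2 hs]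
end
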